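/- arXiv:2012.11023 — 4 statements merged into one kernel-verified Lean document; each statement's English description precedes it below -/
import Mathlib

section
/- Let θ > 1/p > 1 > p > 0 (so in particular pθ > 1). If N_s < 2 + α + β, then the Grushin Lane–Emden system −Δ_s u = v^p, −Δ_s v = u^θ, u, v > 0 on ℝ^N admits no smooth stable solution. -/
open MeasureTheory Real

noncomputable section

/-- Euclidean norm on `Fin n → ℝ`. -/
def enorm' {n : ℕ} (x : Fin n → ℝ) : ℝ := Real.sqrt (∑ i, (x i) ^ 2)

/-- Points of `ℝ^N = ℝ^{N₁} × ℝ^{N₂}`. -/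
abbrev Pt (N₁ N₂ : ℕ) := (Fin N₁ → ℝ) × (Fin N₂ → ℝ)

variable {N₁ N₂ : ℕ}

/-- Partial derivative in the variable `x i`. -/
def pX (i : Fin N₁) (w : Pt N₁ N₂ → ℝ) (z : Pt N₁ N₂) : ℝ :=
  deriv (fun t => w (Function.update z.1 i t, z.2)) (z.1 i)

/-- Partial derivative in the variable `y j`. -/
def pY (j : Fin N₂) (w : Pt N₁ N₂ → ℝ) (z : Pt N₁ N₂) : ℝ :=
  deriv (fun t => w (z.1, Function.update z.2 j t)) (z.2 j)

/-- Laplacian in the `x`-variables. -/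
def lapX (w : Pt N₁ N₂ → ℝ) (z : Pt N₁ N₂) : ℝ := ∑ i, pX i (pX i w) z

/-- Laplacian in the `y`-variables. -/
def lapY (w : Pt N₁ N₂ → ℝ) (z : Pt N₁ N₂) : ℝ := ∑ j, pY j (pY j w) z

/-- The Grushin operator `Δ_s w = Δ_x w + |x|^{2s} Δ_y w`. -/
def grushinLap (s : ℝ) (w : Pt N₁ N₂ → ℝ) (z : Pt N₁ N₂) : ℝ :=
  lapX w z + (enorm' z.1) ^ (2 * s) * lapY w z

/-- Norm of the Grushin gradient: `|∇_s w| = (|∇_x w|² + |x|^{2s}|∇_y w|²)^{1/2}`. -/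
def grushinGrad (s : ℝ) (w : Pt N₁ N₂ → ℝ) (z : Pt N₁ N₂) : ℝ :=
  Real.sqrt ((∑ i, (pX i w z) ^ 2) + (enorm' z.1) ^ (2 * s) * ∑ j, (pY j w z) ^ 2)

/-- Hilbert–Schmidt norm of the Grushin Hessian `∇_s² w`. -/
def grushinHess (s : ℝ) (w : Pt N₁ N₂ → ℝ) (z : Pt N₁ N₂) : ℝ :=
  Real.sqrt ((∑ i, ∑ j, (pX i (pX j w) z) ^ 2)
    + 2 * (enorm' z.1) ^ (2 * s) * (∑ i, ∑ k, (pX i (pY k w) z) ^ 2)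
    + (enorm' z.1) ^ (4 * s) * ∑ h, ∑ k, (pY h (pY k w) z) ^ 2)

/-- Norm of the gradient in the `x`-variables only. -/
def gradXNorm (w : Pt N₁ N₂ → ℝ) (z : Pt N₁ N₂) : ℝ := Real.sqrt (∑ i, (pX i w z) ^ 2)

/-- Norm of the gradient in the `y`-variables only. -/
def gradYNorm (w : Pt N₁ N₂ → ℝ) (z : Pt N₁ N₂) : ℝ := Real.sqrt (∑ j, (pY j w z) ^ 2)

/-- HS norm of the Hessian in the `x`-variables only. -/
def hessXNorm (w : Pt N₁ N₂ → ℝ) (z : Pt N₁ N₂) : ℝ :=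
  Real.sqrt (∑ i, ∑ j, (pX i (pX j w) z) ^ 2)

/-- HS norm of the Hessian in the `y`-variables only. -/
def hessYNorm (w : Pt N₁ N₂ → ℝ) (z : Pt N₁ N₂) : ℝ :=
  Real.sqrt (∑ h, ∑ k, (pY h (pY k w) z) ^ 2)

/-- `(u,v)` is a smooth positive solution of the Grushin Lane–Emden system
`-Δ_s u = v^p`, `-Δ_s v = u^θ`, `u, v > 0` on `ℝ^N`. -/
def IsLaneEmdenSol (s p θ : ℝ) (u v : Pt N₁ N₂ → ℝ) : Prop :=
  ContDiff ℝ (⊤ : ℕ∞) u ∧ ContDiff ℝ (⊤ : ℕ∞) v ∧ (∀ z, 0 < u z) ∧ (∀ z, 0 < v z) ∧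
  (∀ z, -grushinLap s u z = (v z) ^ p) ∧ (∀ z, -grushinLap s v z = (u z) ^ θ)

/-- Stability of a solution `(u,v)`: there are `η ≥ 0` and smooth positive `ξ, ζ` with
`-Δ_s ξ = p v^{p-1} ζ + η ξ` and `-Δ_s ζ = θ u^{θ-1} ξ + η ζ`. -/
def IsStable (s p θ : ℝ) (u v : Pt N₁ N₂ → ℝ) : Prop :=
  ∃ (η : ℝ) (ξ ζ : Pt N₁ N₂ → ℝ), 0 ≤ η ∧
    ContDiff ℝ (⊤ : ℕ∞) ξ ∧ ContDiff ℝ (⊤ : ℕ∞) ζ ∧ (∀ z, 0 < ξ z) ∧ (∀ z, 0 < ζ z) ∧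
    (∀ z, -grushinLap s ξ z = p * (v z) ^ (p - 1) * ζ z + η * ξ z) ∧
    (∀ z, -grushinLap s ζ z = θ * (u z) ^ (θ - 1) * ξ z + η * ζ z)

/-! ### Directional derivatives -/

/-- directional derivative -/
def DD (e : Pt N₁ N₂) (w : Pt N₁ N₂ → ℝ) (z : Pt N₁ N₂) : ℝ := fderiv ℝ w z e

/-- coordinate vector in `x` -/
def eX (i : Fin N₁) : Pt N₁ N₂ := (Pi.single i 1, 0)

/-- coordinate vector in `y` -/
def eY (j : Fin N₂) : Pt N₁ N₂ := (0, Pi.single j 1)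

/-- abbreviation for smoothness -/
abbrev Sm (f : Pt N₁ N₂ → ℝ) : Prop := ContDiff ℝ (⊤ : ℕ∞) f

lemma Sm.diff {f : Pt N₁ N₂ → ℝ} (hf : Sm f) : Differentiable ℝ f :=
  ContDiff.differentiable hf (by simp)

lemma Sm.DD {f : Pt N₁ N₂ → ℝ} (hf : Sm f) (e : Pt N₁ N₂) : Sm (DD e f) := by
  unfold _root_.DD
  exact (ContDiff.fderiv_right (m := (⊤ : ℕ∞)) hf (by simp)).clm_apply contDiff_const

lemma pX_eq {f : Pt N₁ N₂ → ℝ} (hf : Sm f) (i : Fin N₁) : pX i f = DD (eX i) f := by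
  funext z
  unfold pX DD eX
  have h1 : HasDerivAt (fun t : ℝ => ((Function.update z.1 i t, z.2) : Pt N₁ N₂))
      ((Pi.single i 1, 0) : Pt N₁ N₂) (z.1 i) :=
    (hasDerivAt_update z.1 i (z.1 i)).prodMk (hasDerivAt_const _ _)
  have h2 : HasFDerivAt f (fderiv ℝ f z) ((Function.update z.1 i (z.1 i), z.2) : Pt N₁ N₂) := by
    simpa using (hf.diff z).hasFDerivAt
  exact (h2.comp_hasDerivAt _ h1).deriv

lemma pY_eq {f : Pt N₁ N₂ → ℝ} (hf : Sm f) (i : Fin N₂) : pY i f = DD (eY i) f := by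
  funext z
  unfold pY DD eY
  have h1 : HasDerivAt (fun t : ℝ => ((z.1, Function.update z.2 i t) : Pt N₁ N₂))
      ((0, Pi.single i 1) : Pt N₁ N₂) (z.2 i) :=
    (hasDerivAt_const _ _).prodMk (hasDerivAt_update z.2 i (z.2 i))
  have h2 : HasFDerivAt f (fderiv ℝ f z) ((z.1, Function.update z.2 i (z.2 i)) : Pt N₁ N₂) := by
    simpa using (hf.diff z).hasFDerivAt
  exact (h2.comp_hasDerivAt _ h1).deriv

/-- the weight -/
def wt (s : ℝ) (z : Pt N₁ N₂) : ℝ := (enorm' z.1) ^ (2 * s)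

lemma wt_nonneg (s : ℝ) (z : Pt N₁ N₂) : 0 ≤ wt s z :=
  Real.rpow_nonneg (Real.sqrt_nonneg _) _

lemma wt_cont {s : ℝ} (hs : 0 ≤ s) : Continuous (wt s : Pt N₁ N₂ → ℝ) := by
  unfold wt enorm'
  apply Continuous.rpow_const
  · fun_prop
  · intro z; right; linarith

lemma gl_eq (s : ℝ) {f : Pt N₁ N₂ → ℝ} (hf : Sm f) (z : Pt N₁ N₂) :
    grushinLap s f z = ∑ i, DD (eX i) (DD (eX i) f) z
      + wt s z * ∑ j, DD (eY j) (DD (eY j) f) z := by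
  unfold grushinLap lapX lapY wt
  congr 1
  · refine Finset.sum_congr rfl fun i _ => ?_
    rw [pX_eq hf, pX_eq (hf.DD _)]
  · congr 1
    refine Finset.sum_congr rfl fun i _ => ?_
    rw [pY_eq hf, pY_eq (hf.DD _)]

/-- carre du champ -/
def Ga (s : ℝ) (f g : Pt N₁ N₂ → ℝ) (z : Pt N₁ N₂) : ℝ :=
  ∑ i, DD (eX i) f z * DD (eX i) g z + wt s z * ∑ j, DD (eY j) f z * DD (eY j) g z

lemma Ga_self_nonneg (s : ℝ) (f : Pt N₁ N₂ → ℝ) (z : Pt N₁ N₂) : 0 ≤ Ga s f f z := by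
  unfold Ga
  have := wt_nonneg s z
  have h1 : 0 ≤ ∑ i, DD (eX i) f z * DD (eX i) f z :=
    Finset.sum_nonneg fun i _ => mul_self_nonneg _
  have h2 : 0 ≤ ∑ i, DD (eY i) f z * DD (eY i) f z :=
    Finset.sum_nonneg fun i _ => mul_self_nonneg _
  positivity

lemma Ga_comm (s : ℝ) (f g : Pt N₁ N₂ → ℝ) (z : Pt N₁ N₂) : Ga s f g z = Ga s g f z := by
  unfold Ga; simp only [mul_comm]

lemma Ga_cs (s : ℝ) (f g : Pt N₁ N₂ → ℝ) (z : Pt N₁ N₂) :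
    (Ga s f g z) ^ 2 ≤ Ga s f f z * Ga s g g z := by
  have key : ∀ t : ℝ, 0 ≤ Ga s g g z * (t * t) + (2 * Ga s f g z) * t + Ga s f f z := by
    intro t
    have : Ga s g g z * (t * t) + (2 * Ga s f g z) * t + Ga s f f z
      = ∑ i, (DD (eX i) f z + t * DD (eX i) g z) ^ 2
        + wt s z * ∑ j, (DD (eY j) f z + t * DD (eY j) g z) ^ 2 := by
      have e : ∀ a b : ℝ, (a + t * b) ^ 2 = (t * t) * (b * b) + (2 * t) * (a * b) + a * a := by
        intro a b; ring
      simp only [e, Finset.sum_add_distrib, ← Finset.mul_sum]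
      unfold Ga
      ring
    rw [this]
    have := wt_nonneg s z
    positivity
  have := discrim_le_zero key
  unfold discrim at this
  nlinarith

lemma DD_mul {f g : Pt N₁ N₂ → ℝ} (hf : Sm f) (hg : Sm g) (e : Pt N₁ N₂) :
    DD e (fun z => f z * g z) = fun z => f z * DD e g z + g z * DD e f z := by
  funext z
  unfold DD
  rw [fderiv_fun_mul (hf.diff z) (hg.diff z)]
  simp

lemma DD_add {f g : Pt N₁ N₂ → ℝ} (hf : Sm f) (hg : Sm g) (e : Pt N₁ N₂) :
    DD e (fun z => f z + g z) = fun z => DD e f z + DD e g z := by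
  funext z
  unfold DD
  rw [fderiv_fun_add (hf.diff z) (hg.diff z)]
  simp

lemma DD_comp {f : Pt N₁ N₂ → ℝ} (hf : Sm f) {F F' : ℝ → ℝ}
    (hF : ∀ z, HasDerivAt F (F' (f z)) (f z)) (e : Pt N₁ N₂) :
    DD e (fun z => F (f z)) = fun z => F' (f z) * DD e f z := by
  funext z
  unfold DD
  have := ((hF z).comp_hasFDerivAt z (hf.diff z).hasFDerivAt).fderiv
  rw [show (fun z => F (f z)) = F ∘ f from rfl, this]
  simp

lemma DD2_mul {f g : Pt N₁ N₂ → ℝ} (hf : Sm f) (hg : Sm g) (e : Pt N₁ N₂) (z : Pt N₁ N₂) :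
    DD e (DD e (fun z => f z * g z)) z =
      f z * DD e (DD e g) z + g z * DD e (DD e f) z + 2 * (DD e f z * DD e g z) := by
  rw [DD_mul hf hg, DD_add (hf.mul (hg.DD e)) (hg.mul (hf.DD e)), DD_mul hf (hg.DD e),
    DD_mul hg (hf.DD e)]
  ring

lemma gl_mul (s : ℝ) {f g : Pt N₁ N₂ → ℝ} (hf : Sm f) (hg : Sm g) (z : Pt N₁ N₂) :
    grushinLap s (fun z => f z * g z) z =
      f z * grushinLap s g z + g z * grushinLap s f z + 2 * Ga s f g z := by
  rw [gl_eq s hf, gl_eq s hg, gl_eq s (hf.mul hg)]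
  simp only [DD2_mul hf hg, Finset.sum_add_distrib, ← Finset.mul_sum]
  unfold Ga
  ring

lemma DD2_comp {f : Pt N₁ N₂ → ℝ} (hf : Sm f) {F F' F'' : ℝ → ℝ}
    (hF : ∀ z, HasDerivAt F (F' (f z)) (f z)) (hF' : ∀ z, HasDerivAt F' (F'' (f z)) (f z))
    (hs : Sm (fun z => F' (f z))) (e : Pt N₁ N₂) (z : Pt N₁ N₂) :
    DD e (DD e (fun z => F (f z))) z =
      F' (f z) * DD e (DD e f) z + F'' (f z) * (DD e f z * DD e f z) := by
  rw [DD_comp hf hF, DD_mul hs (hf.DD e), DD_comp hf hF']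
  ring

lemma gl_comp (s : ℝ) {f : Pt N₁ N₂ → ℝ} (hf : Sm f) {F F' F'' : ℝ → ℝ}
    (hF : ∀ z, HasDerivAt F (F' (f z)) (f z)) (hF' : ∀ z, HasDerivAt F' (F'' (f z)) (f z))
    (hs0 : Sm (fun z => F (f z))) (hs : Sm (fun z => F' (f z))) (z : Pt N₁ N₂) :
    grushinLap s (fun z => F (f z)) z =
      F' (f z) * grushinLap s f z + F'' (f z) * Ga s f f z := by
  rw [gl_eq s hf, gl_eq s hs0]
  simp only [DD2_comp hf hF hF' hs, Finset.sum_add_distrib, ← Finset.mul_sum]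
  unfold Ga
  ring

lemma Ga_mul (s : ℝ) {f g : Pt N₁ N₂ → ℝ} (hf : Sm f) (hg : Sm g) (h : Pt N₁ N₂ → ℝ)
    (z : Pt N₁ N₂) :
    Ga s (fun z => f z * g z) h z = f z * Ga s g h z + g z * Ga s f h z := by
  unfold Ga
  simp only [DD_mul hf hg, add_mul, mul_assoc, Finset.sum_add_distrib, ← Finset.mul_sum]
  ring

lemma Ga_comp (s : ℝ) {f : Pt N₁ N₂ → ℝ} (hf : Sm f) {F F' : ℝ → ℝ}
    (hF : ∀ z, HasDerivAt F (F' (f z)) (f z)) (h : Pt N₁ N₂ → ℝ) (z : Pt N₁ N₂) :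
    Ga s (fun z => F (f z)) h z = F' (f z) * Ga s f h z := by
  unfold Ga
  simp only [DD_comp hf hF, mul_assoc, ← Finset.mul_sum]
  ring

/-! ### Green's identity -/

lemma DD_cs {g : Pt N₁ N₂ → ℝ} (hg : HasCompactSupport g) (e : Pt N₁ N₂) :
    HasCompactSupport (DD e g) := hg.fderiv_apply (𝕜 := ℝ) e

lemma ibp1 {f g w : Pt N₁ N₂ → ℝ} (hf : Sm f) (hg : Sm g) (hw : Continuous w)
    (e : Pt N₁ N₂) (hwe : ∀ z (t : ℝ), w (z + t • e) = w z) (hc : HasCompactSupport f ∨ HasCompactSupport g) :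
    ∫ z, (w z * f z) * DD e g z = - ∫ z, (w z * DD e f z) * g z := by
  have I : ∀ a b : Pt N₁ N₂ → ℝ, Continuous a → Continuous b →
      (HasCompactSupport a ∨ HasCompactSupport b) → Integrable (fun z => (w z * a z) * b z) := by
    intro a b ha hb h
    apply Continuous.integrable_of_hasCompactSupport
    · fun_prop
    · rcases h with h | h
      · exact (h.mul_left (f := w)).mul_right
      · exact h.mul_left
  have : (volume : Measure (Pt N₁ N₂)).IsAddHaarMeasure :=
    Measure.prod.instIsAddHaarMeasure _ _
  have := integral_bilinear_hasLineDerivAt_right_eq_neg_left_of_integrable (μ := volume)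
    (f := fun z => w z * f z) (f' := fun z => w z * DD e f z) (g := g) (g' := DD e g) (v := e)
    (B := ContinuousLinearMap.mul ℝ ℝ)
    (by simpa using I _ _ (hf.DD e).continuous hg.continuous (hc.imp (DD_cs · e) id))
    (by simpa using I _ _ hf.continuous (hg.DD e).continuous (hc.imp id (DD_cs · e)))
    (by simpa using I _ _ hf.continuous hg.continuous hc)
    (by
      intro z _
      have h1 : HasLineDerivAt ℝ f (DD e f z) z e := (hf.diff z).hasFDerivAt.hasLineDerivAt e
      unfold HasLineDerivAt at h1 ⊢
      simp only [hwe]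
      exact h1.const_mul _)
    (by
      intro z _
      exact (hg.diff z).hasFDerivAt.hasLineDerivAt e)
  simpa using this

lemma ibp2 {f g w : Pt N₁ N₂ → ℝ} (hf : Sm f) (hg : Sm g) (hw : Continuous w)
    (e : Pt N₁ N₂) (hwe : ∀ z (t : ℝ), w (z + t • e) = w z) (hc : HasCompactSupport g) :
    ∫ z, w z * (f z * DD e (DD e g) z) = ∫ z, w z * (g z * DD e (DD e f) z) := by
  have h1 := ibp1 hf (hg.DD e) hw e hwe (Or.inr (DD_cs hc e))
  have h2 := ibp1 hg (hf.DD e) hw e hwe (Or.inl hc)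
  have h3 : ∀ z, (w z * DD e f z) * DD e g z = (w z * DD e g z) * DD e f z := by intro z; ring
  simp only [h3] at h1
  simp only [← mul_assoc]
  rw [h1, h2]

lemma gl_cont {s : ℝ} (hs : 0 ≤ s) {f : Pt N₁ N₂ → ℝ} (hf : Sm f) :
    Continuous (grushinLap s f) := by
  have : grushinLap s f = _ := funext (gl_eq s hf)
  rw [this]
  have hw := wt_cont (N₁ := N₁) (N₂ := N₂) hs
  have h : ∀ e : Pt N₁ N₂, Continuous (DD e (DD e f)) := fun e => ((hf.DD e).DD e).continuous
  fun_prop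

lemma Ga_cont {s : ℝ} (hs : 0 ≤ s) {f g : Pt N₁ N₂ → ℝ} (hf : Sm f) (hg : Sm g) :
    Continuous (Ga s f g) := by
  unfold Ga
  have hw := wt_cont (N₁ := N₁) (N₂ := N₂) hs
  have h : ∀ e : Pt N₁ N₂, Continuous (DD e f) := fun e => (hf.DD e).continuous
  have h' : ∀ e : Pt N₁ N₂, Continuous (DD e g) := fun e => (hg.DD e).continuous
  fun_prop

lemma gl_cs (s : ℝ) {g : Pt N₁ N₂ → ℝ} (hg : Sm g) (hc : HasCompactSupport g) :
    HasCompactSupport (grushinLap s g) := by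
  apply hc.mono'
  intro z hz
  by_contra hn
  apply hz
  have h0 : ∀ e : Pt N₁ N₂, DD e (DD e g) z = 0 := by
    intro e
    by_contra h
    exact hn ((tsupport_fderiv_apply_subset ℝ e) (tsupport_fderiv_apply_subset (𝕜 := ℝ) (f := DD e g) e (subset_tsupport _ h)))
  simp only [gl_eq s hg, h0]
  simp

lemma Ga_cs' (s : ℝ) {g : Pt N₁ N₂ → ℝ} (hc : HasCompactSupport g) :
    HasCompactSupport (Ga s g g) := by
  apply hc.mono'
  intro z hz
  by_contra hn
  apply hz
  have h0 : ∀ e : Pt N₁ N₂, DD e g z = 0 := by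
    intro e
    by_contra h
    exact hn ((tsupport_fderiv_apply_subset ℝ e) (subset_tsupport _ h))
  unfold Ga
  simp only [h0]
  simp

lemma green {s : ℝ} (hs : 0 ≤ s) {f g : Pt N₁ N₂ → ℝ} (hf : Sm f) (hg : Sm g)
    (hc : HasCompactSupport g) :
    Integrable (fun z => f z * grushinLap s g z - g z * grushinLap s f z) ∧
    ∫ z, (f z * grushinLap s g z - g z * grushinLap s f z) = 0 := by
  have hw := wt_cont (N₁ := N₁) (N₂ := N₂) hs
  have cf := hf.continuous
  have cg := hg.continuous
  have clf := gl_cont hs hf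
  have clg := gl_cont hs hg
  have i1 : Integrable (fun z => f z * grushinLap s g z) :=
    Continuous.integrable_of_hasCompactSupport (by fun_prop) ((gl_cs s hg hc).mul_left)
  have i2 : Integrable (fun z => g z * grushinLap s f z) :=
    Continuous.integrable_of_hasCompactSupport (by fun_prop) (hc.mul_right)
  refine ⟨i1.sub i2, ?_⟩
  rw [integral_sub i1 i2, sub_eq_zero]
  have ex : ∀ a b : Pt N₁ N₂ → ℝ, Sm a → Sm b → (HasCompactSupport a ∨ HasCompactSupport b) →
      ∫ z, a z * grushinLap s b z = (∑ i, ∫ z, (1 : ℝ) * (a z * DD (eX i) (DD (eX i) b) z))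
        + ∑ j, ∫ z, wt s z * (a z * DD (eY j) (DD (eY j) b) z) := by
    intro a b ha hb h
    have ca := ha.continuous
    have cb : ∀ e : Pt N₁ N₂, Continuous (DD e (DD e b)) := fun e => ((hb.DD e).DD e).continuous
    have hcs : ∀ e : Pt N₁ N₂, HasCompactSupport (fun z => a z * DD e (DD e b) z) := by
      intro e
      rcases h with h | h
      · exact h.mul_right
      · exact (DD_cs (DD_cs h e) e).mul_left
    have J1 : ∀ i ∈ (Finset.univ : Finset (Fin N₁)),
        Integrable (fun z => (1:ℝ) * (a z * DD (eX i) (DD (eX i) b) z)) := by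
      intro i _
      exact Continuous.integrable_of_hasCompactSupport
        (by have := cb (eX i); fun_prop) (hcs _).mul_left
    have J2 : ∀ j ∈ (Finset.univ : Finset (Fin N₂)),
        Integrable (fun z => wt s z * (a z * DD (eY j) (DD (eY j) b) z)) := by
      intro i _
      exact Continuous.integrable_of_hasCompactSupport
        (by have := cb (eY i); fun_prop) (hcs _).mul_left
    rw [← integral_finsetSum _ J1, ← integral_finsetSum _ J2,
      ← integral_add (integrable_finsetSum _ J1) (integrable_finsetSum _ J2)]
    congr 1
    funext z
    rw [gl_eq s hb]
    simp only [mul_add, Finset.mul_sum, one_mul]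
    congr 1
    refine Finset.sum_congr rfl fun i _ => by ring
  rw [ex f g hf hg (Or.inr hc), ex g f hg hf (Or.inl hc)]
  congr 1
  · refine Finset.sum_congr rfl fun i _ => ?_
    exact ibp2 (w := fun _ => 1) hf hg continuous_const _ (fun _ _ => rfl) hc
  · refine Finset.sum_congr rfl fun i _ => ?_
    refine ibp2 (w := wt s) hf hg hw _ (fun z t => ?_) hc
    simp [wt, eY]

/-! ### Elementary inequalities -/

lemma pow_le_eps {κ ε : ℝ} (h0 : 0 ≤ κ) (h1 : κ < 1) (hε : 0 < ε) :
    ∃ C : ℝ, 0 ≤ C ∧ ∀ M : ℝ, 0 < M → M ^ κ ≤ ε * M + C := by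
  set K : ℝ := ε ^ (1 / (κ - 1)) with hK
  have hKpos : 0 < K := Real.rpow_pos_of_pos hε _
  refine ⟨K ^ κ, by positivity, fun M hM => ?_⟩
  rcases le_total M K with h | h
  · have := Real.rpow_le_rpow hM.le h h0
    have : 0 < ε * M := by positivity
    linarith
  · have e1 : M ^ κ = M ^ (κ - 1) * M := by
      rw [← Real.rpow_add_one hM.ne']; congr 1; ring
    have e2 : M ^ (κ - 1) ≤ K ^ (κ - 1) :=
      Real.rpow_le_rpow_of_nonpos hKpos h (by linarith)
    have e3 : K ^ (κ - 1) = ε := by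
      rw [hK, ← Real.rpow_mul hε.le]
      rw [one_div, inv_mul_cancel₀ (by linarith), Real.rpow_one]
    rw [e3] at e2
    have : 0 ≤ K ^ κ := by positivity
    nlinarith

lemma young {P Q σ τ : ℝ} (hP : 0 < P) (hQ : 0 < Q) (hσ : 0 ≤ σ) (hτ : 0 ≤ τ)
    (hκ : σ / P + τ / Q < 1) : ∃ L : ℕ, ∀ l : ℕ, L ≤ l → ∀ ε : ℝ, 0 < ε → ∃ C : ℝ, 0 ≤ C ∧
      ∀ a b t : ℝ, 0 < a → 0 < b → 0 ≤ t → t ≤ 1 →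
      a ^ σ * b ^ τ * t ^ (2 * l) ≤ ε * ((a ^ P + b ^ Q) * t ^ (2 * l + 4)) + C * t ^ 2 := by
  set κ := σ / P + τ / Q with hk
  have hκ0 : 0 ≤ κ := by positivity
  obtain ⟨L, hL⟩ := exists_nat_ge ((1 + κ) / (1 - κ))
  have h1κ : 0 < 1 - κ := by linarith
  rw [div_le_iff₀ h1κ] at hL
  refine ⟨L + 1, fun l hl ε hε => ?_⟩
  obtain ⟨C, hC0, hC⟩ := pow_le_eps hκ0 hκ hε
  refine ⟨C, hC0, fun a b t ha hb ht ht1 => ?_⟩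
  obtain ⟨k, rfl⟩ : ∃ k, l = k + 1 := ⟨l - 1, by omega⟩
  rcases ht.eq_or_lt with rfl | htp
  · simp
  have haP : 0 < a ^ P := Real.rpow_pos_of_pos ha _
  have hbQ : 0 < b ^ Q := Real.rpow_pos_of_pos hb _
  set W := a ^ P + b ^ Q with hW
  have hWp : 0 < W := by positivity
  have a1 : a ^ σ ≤ W ^ (σ / P) := by
    have : a ^ σ = (a ^ P) ^ (σ / P) := by
      rw [← Real.rpow_mul ha.le]; congr 1; field_simp
    rw [this]
    exact Real.rpow_le_rpow haP.le (by linarith) (by positivity)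
  have b1 : b ^ τ ≤ W ^ (τ / Q) := by
    have : b ^ τ = (b ^ Q) ^ (τ / Q) := by
      rw [← Real.rpow_mul hb.le]; congr 1; field_simp
    rw [this]
    exact Real.rpow_le_rpow hbQ.le (by linarith) (by positivity)
  have ab : a ^ σ * b ^ τ ≤ W ^ κ := by
    rw [hk, Real.rpow_add hWp]
    exact mul_le_mul a1 b1 (by positivity) (by positivity)
  have tt : t ^ (2 * k) ≤ (t ^ (2 * k + 4)) ^ κ := by
    rw [← Real.rpow_natCast t (2 * k), ← Real.rpow_natCast t (2 * k + 4), ← Real.rpow_mul ht]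
    apply Real.rpow_le_rpow_of_exponent_ge htp ht1
    push_cast
    have : (L : ℝ) ≤ k := by exact_mod_cast (by omega : L ≤ k)
    nlinarith
  have main := hC (W * t ^ (2 * k + 4)) (by positivity)
  rw [Real.mul_rpow hWp.le (by positivity)] at main
  have h3 : a ^ σ * b ^ τ * t ^ (2 * k) ≤ W ^ κ * (t ^ (2 * k + 4)) ^ κ :=
    mul_le_mul ab tt (by positivity) (by positivity)
  have h4 := mul_le_mul_of_nonneg_right (h3.trans main) (sq_nonneg t)
  calc a ^ σ * b ^ τ * t ^ (2 * (k + 1)) = a ^ σ * b ^ τ * t ^ (2 * k) * t ^ 2 := by ring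
    _ ≤ _ := h4
    _ = _ := by ring

lemma amgm {q h D p k : ℝ} (hp : 0 < p) (hh : 0 ≤ h) (hD : 0 ≤ D) (hq : q ^ 2 ≤ h * D) :
    2 * k * q ≤ p * h + k ^ 2 * D / p := by
  have hnn : 0 ≤ p * h + k ^ 2 * D / p := by positivity
  apply abs_le_of_sq_le_sq' _ hnn |>.2
  have e : (p * h + k ^ 2 * D / p) ^ 2 = (p * h - k ^ 2 * D / p) ^ 2 + 4 * k ^ 2 * (h * D) := by
    field_simp; ring
  rw [e]
  nlinarith [sq_nonneg (p * h - k ^ 2 * D / p), mul_le_mul_of_nonneg_left hq (sq_nonneg k)]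

lemma alg_lap {T t lc gcc D m : ℝ} (hT : 0 ≤ T) (ht : 0 ≤ t) (ht1 : t ≤ 1) (hm : 1 ≤ m)
    (hlc : |lc| ≤ D) (hg0 : 0 ≤ gcc) (hg : gcc ≤ D) :
    |m * (T * t) * lc + m * (m - 1) * T * gcc| ≤ m ^ 2 * D * T := by
  have hD : 0 ≤ D := hg0.trans hg
  have h1 : |m * (T * t) * lc| ≤ m * T * D := by
    rw [abs_mul, abs_of_nonneg (by positivity)]
    have : m * (T * t) ≤ m * T := by nlinarith [mul_nonneg hT (sub_nonneg.2 ht1)]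
    exact mul_le_mul this hlc (abs_nonneg _) (by positivity)
  have hmm : 0 ≤ m * (m - 1) * T := by
    have : 0 ≤ m - 1 := by linarith
    positivity
  have h2 : |m * (m - 1) * T * gcc| ≤ m * (m - 1) * T * D := by
    rw [abs_of_nonneg (by positivity)]
    exact mul_le_mul_of_nonneg_left hg hmm
  calc _ ≤ _ := abs_add_le _ _
    _ ≤ m * T * D + m * (m - 1) * T * D := add_le_add h1 h2
    _ = _ := by ring

lemma alg1 {P w u T t guu guc lpsi D m ε : ℝ} (hP : 0 ≤ P) 
    (hε : 0 < ε) (hD : 0 ≤ D) (hguu : 0 ≤ guu)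
    (hl : |lpsi| ≤ m ^ 2 * D * T) (hguc : guc ^ 2 ≤ guu * D) :
    P * (u * lpsi + (T * t ^ 2) * (-w) + 2 * (m * (T * t) * guc)) ^ 2 ≤
      (1 + ε) * ((P * w ^ 2) * (T ^ 2 * t ^ 4)) +
      (1 + 1 / ε) * (8 * m ^ 2 * D * (P * T ^ 2 * t ^ 2 * guu)
        + 2 * m ^ 4 * D ^ 2 * (u ^ 2 * P * T ^ 2)) := by
  set E := u * lpsi + 2 * (m * (T * t) * guc) with hE
  have h1 : lpsi ^ 2 ≤ m ^ 4 * D ^ 2 * T ^ 2 := by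
    have := pow_le_pow_left₀ (abs_nonneg _) hl 2
    rw [sq_abs] at this
    linarith [this, (by ring : (m ^ 2 * D * T) ^ 2 = m ^ 4 * D ^ 2 * T ^ 2)]
  have hE2 : E ^ 2 ≤ 8 * m ^ 2 * D * (T ^ 2 * t ^ 2 * guu) + 2 * m ^ 4 * D ^ 2 * (u ^ 2 * T ^ 2) := by
    have a := mul_le_mul_of_nonneg_left h1 (sq_nonneg u)
    have b := mul_le_mul_of_nonneg_left hguc (sq_nonneg (m * (T * t)))
    nlinarith [sq_nonneg (u * lpsi - 2 * (m * (T * t) * guc))]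
  have h2 : (-(w * (T * t ^ 2)) + E) ^ 2 ≤ (1 + ε) * (w * (T * t ^ 2)) ^ 2 + (1 + 1 / ε) * E ^ 2 := by
    have e : (1 + ε) * (w * (T * t ^ 2)) ^ 2 + (1 + 1 / ε) * E ^ 2 - (-(w * (T * t ^ 2)) + E) ^ 2
      = (ε * (w * (T * t ^ 2)) + E) ^ 2 / ε := by
      field_simp; ring
    have : 0 ≤ (ε * (w * (T * t ^ 2)) + E) ^ 2 / ε := by positivity
    linarith
  have h3 : 0 ≤ 1 + 1 / ε := by positivity
  have h4 := h2.trans (add_le_add_right (mul_le_mul_of_nonneg_left hE2 h3) _)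
  have h5 := mul_le_mul_of_nonneg_left h4 hP
  calc _ = P * (-(w * (T * t ^ 2)) + E) ^ 2 := by rw [hE]; ring
    _ ≤ _ := h5
    _ = _ := by ring

lemma alg2 {P w u T t guu guc lpsi D m ε A : ℝ} (hP : 0 ≤ P) (hw : 0 ≤ w) (hu : 0 ≤ u)
    (hε : 0 < ε) (hD : 0 ≤ D) (hguu : 0 ≤ guu) (ht : 0 ≤ t) (ht1 : t ≤ 1)
    (hl : |lpsi| ≤ (2 * m) ^ 2 * D * (T ^ 2 * t ^ 2)) (hguc : guc ^ 2 ≤ guu * D) :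
    (P * w) * (u * lpsi + (T ^ 2 * t ^ 4) * (-w) + 2 * (2 * m * (T ^ 2 * t ^ 3) * guc))
      + A * (T ^ 2 * t ^ 4) ≤
    A * (T ^ 2 * t ^ 4) - (1 - ε) * ((P * w ^ 2) * (T ^ 2 * t ^ 4))
      + 4 * m ^ 2 * D / ε * (P * T ^ 2 * t ^ 2 * guu) + 4 * m ^ 2 * D * (u * (P * w) * T ^ 2) := by
  have h1 : u * lpsi ≤ u * (4 * m ^ 2 * D * T ^ 2) := by
    apply mul_le_mul_of_nonneg_left _ hu
    have t2 : t ^ 2 ≤ 1 := pow_le_one₀ ht ht1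
    have : 0 ≤ 4 * m ^ 2 * D * T ^ 2 := by positivity
    calc lpsi ≤ |lpsi| := le_abs_self _
      _ ≤ _ := hl
      _ = (4 * m ^ 2 * D * T ^ 2) * t ^ 2 := by ring
      _ ≤ _ := by nlinarith
  have h3 : w * (4 * m * (T ^ 2 * t ^ 3) * guc) ≤
      ε * (w ^ 2 * (T ^ 2 * t ^ 4)) + 4 * m ^ 2 * D / ε * (T ^ 2 * t ^ 2 * guu) := by
    have k := amgm (q := T * t ^ 2 * w * (T * t * guc)) (h := w ^ 2 * (T ^ 2 * t ^ 4))
      (D := T ^ 2 * t ^ 2 * (guu * D)) (p := ε) (k := 2 * m) hε (by positivity) (by positivity) (by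
        have := mul_le_mul_of_nonneg_left hguc
          (by positivity : 0 ≤ (w ^ 2 * (T ^ 2 * t ^ 4)) * (T ^ 2 * t ^ 2))
        linarith [this, (by ring : (T * t ^ 2 * w * (T * t * guc)) ^ 2 = (w ^ 2 * (T ^ 2 * t ^ 4)) * (T ^ 2 * t ^ 2) * guc ^ 2),
          (by ring : w ^ 2 * (T ^ 2 * t ^ 4) * (T ^ 2 * t ^ 2 * (guu * D)) = w ^ 2 * (T ^ 2 * t ^ 4) * (T ^ 2 * t ^ 2) * (guu * D))])
    calc _ = 2 * (2 * m) * (T * t ^ 2 * w * (T * t * guc)) := by ring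
      _ ≤ _ := k
      _ = _ := by ring
  have a := mul_le_mul_of_nonneg_left h1 (by positivity : 0 ≤ P * w)
  have b := mul_le_mul_of_nonneg_left h3 hP
  have e1 : (P * w) * (u * lpsi + (T ^ 2 * t ^ 4) * (-w) + 2 * (2 * m * (T ^ 2 * t ^ 3) * guc))
     = P * w * (u * lpsi) - P * w ^ 2 * (T ^ 2 * t ^ 4) + P * (w * (4 * m * (T ^ 2 * t ^ 3) * guc)) := by ring
  rw [e1]
  have e2 : P * (ε * (w ^ 2 * (T ^ 2 * t ^ 4)) + 4 * m ^ 2 * D / ε * (T ^ 2 * t ^ 2 * guu))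
    = ε * (P * w ^ 2 * (T ^ 2 * t ^ 4)) + 4 * m ^ 2 * D / ε * (P * T ^ 2 * t ^ 2 * guu) := by ring
  have e3 : P * w * (u * (4 * m ^ 2 * D * T ^ 2)) = 4 * m ^ 2 * D * (u * (P * w) * T ^ 2) := by ring
  rw [e2] at b
  rw [e3] at a
  linarith

lemma alg3 {P w u y U T t guu gvv gvc leta D k p : ℝ} (hP : 0 ≤ P) (hw : 0 ≤ w) (hu : 0 ≤ u)
    (hy : 0 ≤ y) (hU : 0 ≤ U) (hp : 0 < p) (hp1 : p < 1)
    (hD : 0 ≤ D) (hgvv : 0 ≤ gvv) (ht : 0 ≤ t) (ht1 : t ≤ 1)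
    (hl : |leta| ≤ k ^ 2 * D * T ^ 2) (hgvc : gvc ^ 2 ≤ gvv * D) :
    u ^ 2 * (P * leta + (T ^ 2 * t ^ 2) * ((1 - p) * (P * y) * (-U) + (1 - p) * (-p * (P * y ^ 2)) * gvv)
        + 2 * ((1 - p) * (P * y) * (k * (T ^ 2 * t) * gvc)))
      - P * (T ^ 2 * t ^ 2) * (2 * (u * (-w)) + 2 * guu) ≤
    2 * (u * (P * w) * T ^ 2) - 2 * (P * T ^ 2 * t ^ 2 * guu)
      + (k ^ 2 * D + k ^ 2 * D / p) * (u ^ 2 * P * T ^ 2) := by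
  have t2 : t ^ 2 ≤ 1 := pow_le_one₀ ht ht1
  have hq : 0 ≤ 1 - p := by linarith
  have h1 : leta ≤ k ^ 2 * D * T ^ 2 := (le_abs_self _).trans hl
  have h2 : 2 * k * (t * y * gvc) ≤ p * (t ^ 2 * y ^ 2 * gvv) + k ^ 2 * D / p := by
    apply amgm hp (by positivity) hD
    have := mul_le_mul_of_nonneg_left hgvc (by positivity : 0 ≤ (t * y) ^ 2)
    linarith [this, (by ring : (t * y * gvc) ^ 2 = (t * y) ^ 2 * gvc ^ 2),
      (by ring : t ^ 2 * y ^ 2 * gvv * D = (t * y) ^ 2 * (gvv * D))]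
  have h3 : (1 - p) * (2 * k * (t * y * gvc) - p * (t ^ 2 * y ^ 2 * gvv)) ≤ k ^ 2 * D / p := by
    have c : 0 ≤ k ^ 2 * D / p := by positivity
    nlinarith
  have a := mul_le_mul_of_nonneg_left h1 (by positivity : 0 ≤ u ^ 2 * P)
  have b := mul_le_mul_of_nonneg_left h3 (by positivity : 0 ≤ u ^ 2 * P * T ^ 2)
  have c : 0 ≤ u ^ 2 * (T ^ 2 * t ^ 2) * ((1 - p) * (P * y) * U) := by positivity
  have d : u * (P * w) * T ^ 2 * t ^ 2 ≤ u * (P * w) * T ^ 2 := by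
    have : 0 ≤ u * (P * w) * T ^ 2 := by positivity
    nlinarith
  have e : u ^ 2 * (P * leta + (T ^ 2 * t ^ 2) * ((1 - p) * (P * y) * (-U) + (1 - p) * (-p * (P * y ^ 2)) * gvv)
        + 2 * ((1 - p) * (P * y) * (k * (T ^ 2 * t) * gvc)))
      - P * (T ^ 2 * t ^ 2) * (2 * (u * (-w)) + 2 * guu)
    = u ^ 2 * P * leta - u ^ 2 * (T ^ 2 * t ^ 2) * ((1 - p) * (P * y) * U)
      + u ^ 2 * P * T ^ 2 * ((1 - p) * (2 * k * (t * y * gvc) - p * (t ^ 2 * y ^ 2 * gvv)))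
      + 2 * (u * (P * w) * T ^ 2 * t ^ 2) - 2 * (P * T ^ 2 * t ^ 2 * guu) := by ring
  rw [e]
  have e4 : u ^ 2 * P * T ^ 2 * (k ^ 2 * D / p) = (k ^ 2 * D / p) * (u ^ 2 * P * T ^ 2) := by ring
  have e5 : u ^ 2 * P * (k ^ 2 * D * T ^ 2) = (k ^ 2 * D) * (u ^ 2 * P * T ^ 2) := by ring
  rw [e4] at b
  rw [e5] at a
  linarith

/-! ### Pointwise estimates -/

lemma gl_pow (s : ℝ) {χ : Pt N₁ N₂ → ℝ} (hχ : Sm χ) (n : ℕ) (z : Pt N₁ N₂) :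
    grushinLap s (fun z => χ z ^ (n + 2)) z =
      ((n : ℝ) + 2) * (χ z ^ n * χ z) * grushinLap s χ z
        + ((n : ℝ) + 2) * ((n : ℝ) + 2 - 1) * χ z ^ n * Ga s χ χ z := by
  have := gl_comp s hχ (F := fun x => x ^ (n + 2)) (F' := fun x => ((n : ℝ) + 2) * x ^ (n + 1))
    (F'' := fun x => ((n : ℝ) + 2) * (((n : ℝ) + 1) * x ^ n))
    (fun z => by simpa using hasDerivAt_pow (n + 2) (χ z))
    (fun z => by simpa using (hasDerivAt_pow (n + 1) (χ z)).const_mul ((n : ℝ) + 2))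
    (hχ.pow _) (contDiff_const.mul (hχ.pow _)) z
  rw [this]
  ring

lemma Ga_pow (s : ℝ) {χ : Pt N₁ N₂ → ℝ} (hχ : Sm χ) (n : ℕ) (h : Pt N₁ N₂ → ℝ) (z : Pt N₁ N₂) :
    Ga s h (fun z => χ z ^ (n + 2)) z = ((n : ℝ) + 2) * (χ z ^ n * χ z) * Ga s h χ z := by
  rw [Ga_comm, Ga_comp s hχ (F := fun x => x ^ (n + 2)) (F' := fun x => ((n : ℝ) + 2) * x ^ (n + 1))
    (fun z => by simpa using hasDerivAt_pow (n + 2) (χ z)), Ga_comm]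
  ring

lemma stab_pt {s p θ : ℝ} (hp : 0 < p) {u v ξ ζ φ : Pt N₁ N₂ → ℝ} {η : ℝ} (hη : 0 ≤ η)
    (hξ : Sm ξ) (hφ : Sm φ)
    (hξ0 : ∀ z, 0 < ξ z) (hζ0 : ∀ z, 0 < ζ z) (hv0 : ∀ z, 0 < v z)
    (h1 : ∀ z, -grushinLap s ξ z = p * (v z) ^ (p - 1) * ζ z + η * ξ z)
    (h2 : ∀ z, -grushinLap s ζ z = θ * (u z) ^ (θ - 1) * ξ z + η * ζ z) (z : Pt N₁ N₂) :
    θ * (u z) ^ (θ - 1) * (φ z) ^ 2 - 1 / p * ((v z) ^ (1 - p) * (grushinLap s φ z) ^ 2) ≤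
    ζ z * grushinLap s (fun z => ((φ z / ξ z) * (φ z / ξ z)) * ξ z) z
      - (((φ z / ξ z) * (φ z / ξ z)) * ξ z) * grushinLap s ζ z := by
  set r : Pt N₁ N₂ → ℝ := fun z => φ z / ξ z with hr
  have hrS : Sm r := hφ.div hξ (fun z => (hξ0 z).ne')
  have e1 : grushinLap s (fun z => (r z * r z) * ξ z) z =
      2 * r z * grushinLap s φ z - r z ^ 2 * grushinLap s ξ z + 2 * ξ z * Ga s r r z := by
    have hφe : φ = fun z => r z * ξ z := by
      funext z; simp only [hr]; field_simp [(hξ0 z).ne']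
    rw [hφe, gl_mul s hrS hξ, gl_mul s (hrS.mul hrS) hξ, gl_mul s hrS hrS, Ga_mul s hrS hrS]
    ring
  change _ ≤ ζ z * grushinLap s (fun z => (r z * r z) * ξ z) z - ((r z * r z) * ξ z) * grushinLap s ζ z
  rw [e1]
  have hφz : φ z = r z * ξ z := by simp only [hr]; field_simp [(hξ0 z).ne']
  have g0 := Ga_self_nonneg s r z
  have k1 := h1 z
  have k2 := h2 z
  have x0 := hξ0 z
  have z0 := hζ0 z
  have v0 := hv0 z
  set P := v z ^ (1 - p) with hP
  have hPp : 0 < P := Real.rpow_pos_of_pos v0 _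
  have hinv : v z ^ (p - 1) = P⁻¹ := by
    rw [hP, ← Real.rpow_neg v0.le]; congr 1; ring
  rw [hinv] at k1
  rw [hφz]
  set L := grushinLap s φ z
  have e2 : grushinLap s ξ z = -(p * P⁻¹ * ζ z + η * ξ z) := by linarith
  have e3 : grushinLap s ζ z = -(θ * u z ^ (θ - 1) * ξ z + η * ζ z) := by linarith
  rw [e2, e3]
  have sq : 0 ≤ (p * P⁻¹ * (r z * ζ z) + L) ^ 2 * (P / p) := by positivity
  have sqe : (p * P⁻¹ * (r z * ζ z) + L) ^ 2 * (P / p) =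
      p * P⁻¹ * (r z * ζ z) ^ 2 + 2 * (r z * ζ z) * L + 1 / p * (P * L ^ 2) := by
    field_simp
    ring
  rw [sqe] at sq
  have q1 : 0 ≤ 2 * ζ z * ξ z * Ga s r r z := by positivity
  have q2 : 0 ≤ 2 * η * (r z ^ 2 * ξ z * ζ z) := by positivity
  nlinarith

lemma rp_facts {v p : ℝ} (hv : 0 < v) :
    v = v ^ (1 - p) * v ^ p ∧ v ^ (p + 1) = v ^ (1 - p) * (v ^ p) ^ 2 ∧
    v ^ (-p) = v ^ (1 - p) * v⁻¹ ∧ v ^ (-p - 1) = v ^ (1 - p) * v⁻¹ ^ 2 := by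
  have h1 : v = v ^ (1 - p) * v ^ p := by
    rw [← Real.rpow_add hv]; simp
  refine ⟨h1, ?_, ?_, ?_⟩
  · rw [Real.rpow_add_one hv.ne']
    nth_rewrite 2 [h1]; ring
  · rw [← Real.rpow_neg_one v, ← Real.rpow_add hv]; congr 1; ring
  · rw [pow_two, ← Real.rpow_neg_one v, ← Real.rpow_add hv, ← Real.rpow_add hv]; congr 1; ring

lemma gl_rpow (s p : ℝ) {v : Pt N₁ N₂ → ℝ} (hv : Sm v) (hv0 : ∀ z, 0 < v z) (z : Pt N₁ N₂) :
    grushinLap s (fun z => v z ^ (1 - p)) z =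
      ((1 - p) * (v z ^ (1 - p) * (v z)⁻¹)) * grushinLap s v z
        + (1 - p) * (-p * (v z ^ (1 - p) * (v z)⁻¹ ^ 2)) * Ga s v v z := by
  have := gl_comp s hv (F := fun x => x ^ (1 - p)) (F' := fun x => (1 - p) * x ^ (-p))
    (F'' := fun x => (1 - p) * (-p * x ^ (-p - 1)))
    (fun z => by
      have := Real.hasDerivAt_rpow_const (p := 1 - p) (Or.inl (hv0 z).ne')
      rwa [show (1 - p - 1) = -p by ring] at this)
    (fun z => (Real.hasDerivAt_rpow_const (p := -p) (Or.inl (hv0 z).ne')).const_mul _)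
    (hv.rpow_const_of_ne (fun z => (hv0 z).ne'))
    (contDiff_const.mul (hv.rpow_const_of_ne (fun z => (hv0 z).ne'))) z
  rw [this, (rp_facts (hv0 z)).2.2.1, (rp_facts (hv0 z)).2.2.2]

lemma Ga_rpow (s p : ℝ) {v : Pt N₁ N₂ → ℝ} (hv : Sm v) (hv0 : ∀ z, 0 < v z)
    (h : Pt N₁ N₂ → ℝ) (z : Pt N₁ N₂) :
    Ga s (fun z => v z ^ (1 - p)) h z = ((1 - p) * (v z ^ (1 - p) * (v z)⁻¹)) * Ga s v h z := by
  have := Ga_comp s hv (F := fun x => x ^ (1 - p)) (F' := fun x => (1 - p) * x ^ (-p))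
    (fun z => by
      have := Real.hasDerivAt_rpow_const (p := 1 - p) (Or.inl (hv0 z).ne')
      rwa [show (1 - p - 1) = -p by ring] at this) h z
  rw [this, (rp_facts (hv0 z)).2.2.1]

set_option maxHeartbeats 4000000 in
/-- The uniform energy estimate. -/
lemma energy {s p θ : ℝ} (hs : 0 ≤ s) (hp0 : 0 < p) (hp1 : p < 1) (hθ : 1 / p < θ)
    {χ : Pt N₁ N₂ → ℝ} (hχ : Sm χ) (hχc : HasCompactSupport χ) (hχ0 : ∀ z, 0 ≤ χ z)
    (hχ1 : ∀ z, χ z ≤ 1) :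
    ∃ (l : ℕ) (C : ℝ), ∀ u v : Pt N₁ N₂ → ℝ, IsLaneEmdenSol s p θ u v → IsStable s p θ u v →
      ∫ z, (u z) ^ (θ + 1) * χ z ^ (2 * l + 4) ≤ C := by
  -- bounds on the cut-off
  obtain ⟨D1, hD1⟩ := (gl_cs s hχ hχc).exists_bound_of_continuous (gl_cont hs hχ)
  obtain ⟨D2, hD2⟩ := (Ga_cs' s hχc).exists_bound_of_continuous (Ga_cont hs hχ hχ)
  set D := max (max D1 D2) 0 with hDdef
  have hD : 0 ≤ D := le_max_right _ _
  have hlc : ∀ z, |grushinLap s χ z| ≤ D := fun z =>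
    (hD1 z).trans ((le_max_left _ _).trans (le_max_left _ _))
  have hgc : ∀ z, Ga s χ χ z ≤ D := fun z =>
    ((le_abs_self _).trans (hD2 z)).trans ((le_max_right _ _).trans (le_max_left _ _))
  have hgf : ∀ (f : Pt N₁ N₂ → ℝ) z, (Ga s f χ z) ^ 2 ≤ Ga s f f z * D := fun f z =>
    (Ga_cs s f χ z).trans (mul_le_mul_of_nonneg_left (hgc z) (Ga_self_nonneg s f z))
  -- exponents
  have hθ1 : 1 < p * θ := by
    rw [div_lt_iff₀ hp0] at hθ; linarith
  have hθp : 0 < θ := lt_trans (by positivity) hθ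
  obtain ⟨L1, hL1⟩ := young (P := θ + 1) (Q := p + 1) (σ := 1) (τ := 1) (by linarith) (by linarith)
    (by norm_num) (by norm_num) (by
      rw [div_add_div _ _ (by linarith) (by linarith), div_lt_one (by positivity)]
      nlinarith)
  obtain ⟨L2, hL2⟩ := young (P := θ + 1) (Q := p + 1) (σ := 2) (τ := 1 - p) (by linarith)
    (by linarith) (by norm_num) (by linarith) (by
      rw [div_add_div _ _ (by linarith) (by linarith), div_lt_one (by positivity)]
      nlinarith)
  set l := max L1 L2 with hl
  -- constants
  set δ := (θ - 1 / p) / 2 with hδ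
  have hδ0 : 0 < δ := by rw [hδ]; linarith
  set lam := 1 / p + δ with hlam
  have hp' : 0 < 1 / p := by positivity
  have hlam0 : 0 < lam := by positivity
  set ε := δ / (2 * (lam + 1 / p)) with hε
  have hε0 : 0 < ε := by positivity
  have hεe : ε * (lam + 1 / p) = δ / 2 := by rw [hε]; field_simp
  set m : ℝ := (l : ℝ) + 2 with hm
  set k : ℝ := 2 * (l : ℝ) + 2 with hk
  set K1 := (1 + 1 / ε) * (8 * m ^ 2 * D) with hK1
  set K2 := (1 + 1 / ε) * (2 * m ^ 4 * D ^ 2) with hK2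
  set κ := (1 / p * K1 + lam * (4 * m ^ 2 * D / ε)) / 2 with hκ
  have hκ0 : 0 ≤ κ := by positivity
  set KX := lam * (4 * m ^ 2 * D) + 2 * κ with hKX
  set KY := 1 / p * K2 + κ * (k ^ 2 * D + k ^ 2 * D / p) with hKY
  have hKX0 : 0 ≤ KX := by positivity
  have hKY0 : 0 ≤ KY := by positivity
  set e := δ / (4 * (KX + KY + 1)) with he
  have he0 : 0 < e := by positivity
  have hee : (KX + KY) * e ≤ δ / 4 := by
    have : (KX + KY + 1) * e = δ / 4 := by rw [he]; field_simp
    nlinarith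
  obtain ⟨C1, hC10, hC1⟩ := hL1 l (le_max_left _ _) e he0
  obtain ⟨C2, hC20, hC2⟩ := hL2 l (le_max_right _ _) e he0
  refine ⟨l, (KX * C1 + KY * C2) * (∫ z, χ z ^ 2) / (δ / 4), ?_⟩
  intro u v ⟨hu, hv, hu0, hv0, hequ, heqv⟩ ⟨η, ξ, ζ, hη, hξ, hζ, hξ0, hζ0, heqξ, heqζ⟩
  have hu := (show Sm u from hu)
  have hv := (show Sm v from hv)
  have hξ := (show Sm ξ from hξ)
  have hζ := (show Sm ζ from hζ)
  have hpowc : ∀ n : ℕ, HasCompactSupport (fun z => χ z ^ (n + 1)) := by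
    intro n
    have : (fun z => χ z ^ (n + 1)) = fun z => χ z ^ n * χ z := by funext z; ring
    rw [this]; exact hχc.mul_left
  have hψ : Sm (fun z => χ z ^ (l + 2)) := hχ.pow _
  have hψ2 : Sm (fun z => χ z ^ (2 * l + 2 + 2)) := hχ.pow _
  have hη' : Sm (fun z => χ z ^ (2 * l + 2)) := hχ.pow _
  have hvp : Sm (fun z => v z ^ (1 - p)) := hv.rpow_const_of_ne (fun z => (hv0 z).ne')
  have hφ : Sm (fun z => u z * χ z ^ (l + 2)) := hu.mul hψ
  have hφc : HasCompactSupport (fun z => u z * χ z ^ (l + 2)) := (hpowc (l + 1)).mul_left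
  have hr : Sm (fun z => (u z * χ z ^ (l + 2)) / ξ z) := hφ.div hξ (fun z => (hξ0 z).ne')
  have hrc : HasCompactSupport (fun z => (u z * χ z ^ (l + 2)) / ξ z) := by
    simp only [div_eq_mul_inv]; exact hφc.mul_right
  obtain ⟨I1, Z1⟩ := green hs hζ ((hr.mul hr).mul hξ) ((hrc.mul_left).mul_right)
  obtain ⟨I2, Z2⟩ := green hs hv (hu.mul hψ2) ((hpowc (2 * l + 2 + 1)).mul_left)
  obtain ⟨I3, Z3⟩ := green hs (hu.mul hu) (hvp.mul hη') ((hpowc (2 * l + 1)).mul_left)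
  set J1 : Pt N₁ N₂ → ℝ := fun z => ζ z * grushinLap s (fun z => ((u z * χ z ^ (l + 2)) / ξ z * ((u z * χ z ^ (l + 2)) / ξ z)) * ξ z) z
      - (((u z * χ z ^ (l + 2)) / ξ z * ((u z * χ z ^ (l + 2)) / ξ z)) * ξ z) * grushinLap s ζ z with hJ1
  set J2 : Pt N₁ N₂ → ℝ := fun z => v z * grushinLap s (fun z => u z * χ z ^ (2 * l + 2 + 2)) z
      - (u z * χ z ^ (2 * l + 2 + 2)) * grushinLap s v z with hJ2
  set J3 : Pt N₁ N₂ → ℝ := fun z => (u z * u z) * grushinLap s (fun z => v z ^ (1 - p) * χ z ^ (2 * l + 2)) z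
      - (v z ^ (1 - p) * χ z ^ (2 * l + 2)) * grushinLap s (fun z => u z * u z) z with hJ3
  -- the pointwise inequality
  have main : ∀ z, δ / 4 * ((u z) ^ (θ + 1) * χ z ^ (2 * l + 4)) - (KX * C1 + KY * C2) * χ z ^ 2
      ≤ J1 z - lam * J2 z - κ * J3 z := by
    intro z
    obtain ⟨f1, f2, -, -⟩ := rp_facts (p := p) (hv0 z)
    have a1 := stab_pt (θ := θ) (u := u) hp0 hη hξ hφ hξ0 hζ0 hv0 heqξ heqζ z
    have y1 := hC1 (u z) (v z) (χ z) (hu0 z) (hv0 z) (hχ0 z) (hχ1 z)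
    have y2 := hC2 (u z) (v z) (χ z) (hu0 z) (hv0 z) (hχ0 z) (hχ1 z)
    have eA : u z ^ (θ - 1) * u z ^ 2 = u z ^ (θ + 1) := by
      rw [← Real.rpow_natCast (u z) 2, ← Real.rpow_add (hu0 z)]; congr 1; push_cast; ring
    have eA' : u z * u z ^ θ = u z ^ (θ + 1) := by
      rw [Real.rpow_add_one (hu0 z).ne', mul_comm]
    have lu : grushinLap s u z = -(v z ^ p) := by linarith [hequ z]
    have lv : grushinLap s v z = -(u z ^ θ) := by linarith [heqv z]
    have hT : 0 ≤ χ z ^ l := pow_nonneg (hχ0 z) _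
    have hP0 : 0 < v z ^ (1 - p) := Real.rpow_pos_of_pos (hv0 z) _
    have hw0 : 0 < v z ^ p := Real.rpow_pos_of_pos (hv0 z) _
    have hA0 : 0 < u z ^ (θ + 1) := Real.rpow_pos_of_pos (hu0 z) _
    have hB0 : 0 < v z ^ (p + 1) := Real.rpow_pos_of_pos (hv0 z) _
    have guu := Ga_self_nonneg s u z
    have gvv := Ga_self_nonneg s v z
    have gcc := Ga_self_nonneg s χ z
    set G := v z ^ (1 - p) * (χ z ^ l) ^ 2 * χ z ^ 2 * Ga s u u z with hG
    set Y := u z ^ 2 * v z ^ (1 - p) * (χ z ^ l) ^ 2 with hY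
    set X := u z * v z * (χ z ^ l) ^ 2 with hX
    set A := u z ^ (θ + 1) * ((χ z ^ l) ^ 2 * χ z ^ 4) with hA
    set B := v z ^ (p + 1) * ((χ z ^ l) ^ 2 * χ z ^ 4) with hB
    have hA0' : 0 ≤ A := by positivity
    have hB0' : 0 ≤ B := by positivity
    have b1 : θ * A - 1 / p * ((1 + ε) * B + K1 * G + K2 * Y) ≤ J1 z := by
      refine le_trans ?_ a1
      have := alg1 (P := v z ^ (1 - p)) (w := v z ^ p) (u := u z) (T := χ z ^ l) (t := χ z)
        (guu := Ga s u u z) (guc := Ga s u χ z) (D := D) (m := m) (ε := ε) hP0.le hε0 hD guu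
        (alg_lap hT (hχ0 z) (hχ1 z) (m := m) (by rw [hm]; linarith [(Nat.cast_nonneg l : (0:ℝ) ≤ l)])
          (hlc z) gcc (hgc z)) (hgf u z)
      have eL : grushinLap s (fun z => u z * χ z ^ (l + 2)) z
        = u z * (m * (χ z ^ l * χ z) * grushinLap s χ z + m * (m - 1) * χ z ^ l * Ga s χ χ z)
          + (χ z ^ l * χ z ^ 2) * (-(v z ^ p)) + 2 * (m * (χ z ^ l * χ z) * Ga s u χ z) := by
        rw [gl_mul s hu hψ, gl_pow s hχ, Ga_pow s hχ, lu]
        ring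
      rw [← eL, ← f2] at this
      have e1 : θ * u z ^ (θ - 1) * (u z * χ z ^ (l + 2)) ^ 2 = θ * A := by
        rw [hA, ← eA]; ring
      rw [e1]
      have := mul_le_mul_of_nonneg_left this hp'.le
      have e3 : 1 / p * ((1 + ε) * B + K1 * G + K2 * Y) = 1 / p * ((1 + ε) * (v z ^ (p + 1) * ((χ z ^ l) ^ 2 * χ z ^ 4)) +
        (1 + 1 / ε) *
          (8 * m ^ 2 * D * (v z ^ (1 - p) * (χ z ^ l) ^ 2 * χ z ^ 2 * Ga s u u z) +
            2 * m ^ 4 * D ^ 2 * (u z ^ 2 * v z ^ (1 - p) * (χ z ^ l) ^ 2))) := by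
        rw [hB, hK1, hK2, hG, hY]; ring
      rw [e3]
      linarith
    have b2 : J2 z ≤ A - (1 - ε) * B + 4 * m ^ 2 * D / ε * G + 4 * m ^ 2 * D * X := by
      have hal := alg_lap (T := (χ z ^ l) ^ 2 * χ z ^ 2) (by positivity) (hχ0 z) (hχ1 z) (m := 2 * m)
        (by rw [hm]; linarith [(Nat.cast_nonneg l : (0:ℝ) ≤ l)]) (hlc z) gcc (hgc z)
      have := alg2 (P := v z ^ (1 - p)) (w := v z ^ p) (u := u z) (T := χ z ^ l) (t := χ z)
        (guu := Ga s u u z) (guc := Ga s u χ z) (D := D) (m := m) (ε := ε) (A := u z ^ (θ + 1))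
        hP0.le hw0.le (hu0 z).le hε0 hD guu (hχ0 z) (hχ1 z) hal (hgf u z)
      rw [← f1, ← f2] at this
      have eL : J2 z = v z * (u z * (2 * m * ((χ z ^ l) ^ 2 * χ z ^ 2 * χ z) * grushinLap s χ z +
            2 * m * (2 * m - 1) * ((χ z ^ l) ^ 2 * χ z ^ 2) * Ga s χ χ z) +
          (χ z ^ l) ^ 2 * χ z ^ 4 * (-(v z ^ p)) + 2 * (2 * m * ((χ z ^ l) ^ 2 * χ z ^ 3) * Ga s u χ z)) +
          u z ^ (θ + 1) * ((χ z ^ l) ^ 2 * χ z ^ 4) := by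
        simp only [hJ2]
        rw [gl_mul s hu hψ2, gl_pow s hχ, Ga_pow s hχ, lu, lv, ← eA', hm]
        push_cast
        ring
      rw [eL]
      exact this
    have b3 : J3 z ≤ 2 * X - 2 * G + (k ^ 2 * D + k ^ 2 * D / p) * Y := by
      have hal := alg_lap (T := (χ z ^ l) ^ 2) (by positivity) (hχ0 z) (hχ1 z) (m := k)
        (by rw [hk]; linarith [(Nat.cast_nonneg l : (0:ℝ) ≤ l)]) (hlc z) gcc (hgc z)
      have := alg3 (P := v z ^ (1 - p)) (w := v z ^ p) (u := u z) (y := (v z)⁻¹) (U := u z ^ θ)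
        (T := χ z ^ l) (t := χ z)
        (guu := Ga s u u z) (gvv := Ga s v v z) (gvc := Ga s v χ z) (D := D) (k := k) (p := p)
        hP0.le hw0.le (hu0 z).le (inv_nonneg.2 (hv0 z).le) (Real.rpow_nonneg (hu0 z).le _) hp0 hp1
        hD gvv (hχ0 z) (hχ1 z) hal (hgf v z)
      rw [← f1] at this
      refine le_trans (le_of_eq ?_) this
      simp only [hJ3]
      rw [gl_mul s hvp hη', gl_mul s hu hu, gl_pow s hχ, gl_rpow s p hv hv0, Ga_rpow s p hv hv0,
        Ga_pow s hχ, lu, lv, hk]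
      push_cast
      ring
    have c1 : X ≤ e * (A + B) + C1 * χ z ^ 2 := by
      rw [Real.rpow_one, Real.rpow_one] at y1
      have q1 : X = u z * v z * χ z ^ (2 * l) := by rw [hX]; ring
      have q2 : A + B = (u z ^ (θ + 1) + v z ^ (p + 1)) * χ z ^ (2 * l + 4) := by rw [hA, hB]; ring
      rw [q1, q2]; exact y1
    have c2 : Y ≤ e * (A + B) + C2 * χ z ^ 2 := by
      rw [show (2 : ℝ) = ((2 : ℕ) : ℝ) by norm_num, Real.rpow_natCast] at y2
      have q1 : Y = u z ^ 2 * v z ^ (1 - p) * χ z ^ (2 * l) := by rw [hY]; ring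
      have q2 : A + B = (u z ^ (θ + 1) + v z ^ (p + 1)) * χ z ^ (2 * l + 4) := by rw [hA, hB]; ring
      rw [q1, q2]; exact y2
    have eAA : (u z) ^ (θ + 1) * χ z ^ (2 * l + 4) = A := by rw [hA]; ring
    rw [eAA]
    have d2 := mul_le_mul_of_nonneg_left b2 hlam0.le
    have d3 := mul_le_mul_of_nonneg_left b3 hκ0
    have d4 := mul_le_mul_of_nonneg_left c1 hKX0
    have d5 := mul_le_mul_of_nonneg_left c2 hKY0
    have t1 : θ - lam = δ := by rw [hlam, hδ]; ring
    have t2 : lam * (1 - ε) - 1 / p * (1 + ε) = δ / 2 := by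
      have : lam - 1 / p = δ := by rw [hlam]; ring
      linarith
    have low : δ * A + δ / 2 * B - KX * X - KY * Y ≤ J1 z - lam * J2 z - κ * J3 z := by
      have idt : δ * A + δ / 2 * B - KX * X - KY * Y =
        (θ * A - 1 / p * ((1 + ε) * B + K1 * G + K2 * Y))
        - lam * (A - (1 - ε) * B + 4 * m ^ 2 * D / ε * G + 4 * m ^ 2 * D * X)
        - κ * (2 * X - 2 * G + (k ^ 2 * D + k ^ 2 * D / p) * Y) := by
        rw [← t2, ← t1, hKX, hKY]
        have : 2 * κ * G = (1 / p * K1 + lam * (4 * m ^ 2 * D / ε)) * G := by rw [hκ]; ring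
        linear_combination (-1 : ℝ) * this
      rw [idt]
      linarith
    have d6 := mul_le_mul_of_nonneg_right hee (add_nonneg hA0' hB0')
    have d7 : 0 ≤ δ * A := by positivity
    have d8 : 0 ≤ δ * B := by positivity
    linarith
  -- integrate
  have iL : Integrable (fun z => (u z) ^ (θ + 1) * χ z ^ (2 * l + 4)) := by
    apply Continuous.integrable_of_hasCompactSupport
    · have := (hu.rpow_const_of_ne (p := θ + 1) (fun z => (hu0 z).ne')).continuous
      have := hχ.continuous
      fun_prop
    · exact (hpowc (2 * l + 3)).mul_left
  have iR : Integrable (fun z => χ z ^ 2) := by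
    apply Continuous.integrable_of_hasCompactSupport
    · have := hχ.continuous
      fun_prop
    · exact hpowc 1
  have hint := integral_mono (((iL.const_mul (δ / 4))).sub (iR.const_mul (KX * C1 + KY * C2)))
    ((I1.sub (I2.const_mul lam)).sub (I3.const_mul κ)) main
  have hR : ∫ z, (J1 z - lam * J2 z - κ * J3 z) = 0 := by
    have I1' : Integrable J1 := I1
    have I2' : Integrable J2 := I2
    have I3' : Integrable J3 := I3
    rw [integral_sub (f := fun z => J1 z - lam * J2 z) (g := fun z => κ * J3 z)
      (I1'.sub (I2'.const_mul lam)) (I3'.const_mul κ),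
      integral_sub I1' (I2'.const_mul lam), integral_const_mul, integral_const_mul]
    rw [show ∫ z, J1 z = 0 from Z1, show ∫ z, J2 z = 0 from Z2, show ∫ z, J3 z = 0 from Z3]
    simp
  have hLft : ∫ z, (δ / 4 * ((u z) ^ (θ + 1) * χ z ^ (2 * l + 4)) - (KX * C1 + KY * C2) * χ z ^ 2)
      = δ / 4 * (∫ z, ((u z) ^ (θ + 1) * χ z ^ (2 * l + 4)))
        - (KX * C1 + KY * C2) * (∫ z, χ z ^ 2) := by
    rw [integral_sub (iL.const_mul _) (iR.const_mul _), integral_const_mul, integral_const_mul]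
  rw [le_div_iff₀ (by positivity)]
  have hint' : ∫ z, (δ / 4 * ((u z) ^ (θ + 1) * χ z ^ (2 * l + 4)) - (KX * C1 + KY * C2) * χ z ^ 2)
      ≤ ∫ z, (J1 z - lam * J2 z - κ * J3 z) := hint
  rw [hLft, hR] at hint'
  linarith

/-! ### Scaling -/

/-- anisotropic dilation -/
def dil (a b : ℝ) (z : Pt N₁ N₂) : Pt N₁ N₂ := (a • z.1, b • z.2)

lemma upd_smul {n : ℕ} (a : ℝ) (x : Fin n → ℝ) (i : Fin n) (t : ℝ) :
    a • Function.update x i t = Function.update (a • x) i (a * t) := by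
  funext j
  by_cases h : j = i
  · subst h; simp
  · simp [h]

lemma pX_dil (a b c : ℝ) (f : Pt N₁ N₂ → ℝ) (i : Fin N₁) :
    pX i (fun z => c * f (dil a b z)) = fun z => (c * a) * pX i f (dil a b z) := by
  funext z
  unfold pX dil
  simp only [upd_smul]
  have := deriv_comp_mul_left a (fun t => f (Function.update (a • z.1) i t, b • z.2)) (z.1 i)
  rw [deriv_const_mul_field, this]
  simp [mul_assoc]

lemma pY_dil (a b c : ℝ) (f : Pt N₁ N₂ → ℝ) (i : Fin N₂) :
    pY i (fun z => c * f (dil a b z)) = fun z => (c * b) * pY i f (dil a b z) := by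
  funext z
  unfold pY dil
  simp only [upd_smul]
  have := deriv_comp_mul_left b (fun t => f (a • z.1, Function.update (b • z.2) i t)) (z.2 i)
  rw [deriv_const_mul_field, this]
  simp [mul_assoc]

lemma gl_dil {s R : ℝ} (hR : 0 < R) (c : ℝ) (f : Pt N₁ N₂ → ℝ) (z : Pt N₁ N₂) :
    grushinLap s (fun z => c * f (dil R (R ^ (1 + s)) z)) z =
      c * R ^ 2 * grushinLap s f (dil R (R ^ (1 + s)) z) := by
  unfold grushinLap lapX lapY
  simp only [pX_dil, pY_dil, ← Finset.mul_sum]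
  have h1 : enorm' (dil R (R ^ (1 + s)) z).1 = R * enorm' z.1 := by
    unfold enorm' dil
    simp only [Pi.smul_apply, smul_eq_mul, mul_pow, ← Finset.mul_sum]
    rw [Real.sqrt_mul (sq_nonneg R), Real.sqrt_sq hR.le]
  have h2 : R ^ (1 + s) * R ^ (1 + s) = R ^ 2 * R ^ (2 * s) := by
    rw [← Real.rpow_add hR, ← Real.rpow_natCast R 2, ← Real.rpow_add hR]
    congr 1; push_cast; ring
  rw [h1, Real.mul_rpow hR.le (show 0 ≤ enorm' z.1 from Real.sqrt_nonneg _), mul_assoc c (R ^ (1 + s)), h2]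
  ring

lemma Sm_dil (a b c : ℝ) {f : Pt N₁ N₂ → ℝ} (hf : Sm f) : Sm (fun z => c * f (dil a b z)) := by
  apply contDiff_const.mul
  apply hf.comp
  unfold dil
  fun_prop

lemma scale {s p θ : ℝ} (hpθ : 1 < p * θ) {R : ℝ} (hR : 0 < R) {u v : Pt N₁ N₂ → ℝ}
    (hsol : IsLaneEmdenSol s p θ u v) (hst : IsStable s p θ u v) :
    IsLaneEmdenSol s p θ
      (fun z => R ^ (2 * (p + 1) / (p * θ - 1)) * u (dil R (R ^ (1 + s)) z))
      (fun z => R ^ (2 * (θ + 1) / (p * θ - 1)) * v (dil R (R ^ (1 + s)) z)) ∧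
    IsStable s p θ
      (fun z => R ^ (2 * (p + 1) / (p * θ - 1)) * u (dil R (R ^ (1 + s)) z))
      (fun z => R ^ (2 * (θ + 1) / (p * θ - 1)) * v (dil R (R ^ (1 + s)) z)) := by
  obtain ⟨hu, hv, hu0, hv0, h1, h2⟩ := hsol
  obtain ⟨η, ξ, ζ, hη, hξ, hζ, hξ0, hζ0, h3, h4⟩ := hst
  have hne : p * θ - 1 ≠ 0 := by linarith
  set α := 2 * (p + 1) / (p * θ - 1) with hα
  set β := 2 * (θ + 1) / (p * θ - 1) with hβ
  have r1 : α + 2 = β * p := by rw [hα, hβ]; field_simp; ring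
  have r2 : β + 2 = α * θ := by
    rw [hα, hβ, div_add' _ _ _ hne, div_mul_eq_mul_div]; congr 1; ring
  have hRa : 0 < R ^ α := Real.rpow_pos_of_pos hR _
  have hRb : 0 < R ^ β := Real.rpow_pos_of_pos hR _
  have k1 : R ^ α * R ^ 2 = (R ^ β) ^ p := by
    rw [← Real.rpow_mul hR.le, ← r1, Real.rpow_add hR]; norm_num
  have k2 : R ^ β * R ^ 2 = (R ^ α) ^ θ := by
    rw [← Real.rpow_mul hR.le, ← r2, Real.rpow_add hR]; norm_num
  have k3 : R ^ α * R ^ 2 = (R ^ β) ^ (p - 1) * R ^ β := by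
    rw [k1, ← Real.rpow_add_one hRb.ne']; congr 1; ring
  have k4 : R ^ β * R ^ 2 = (R ^ α) ^ (θ - 1) * R ^ α := by
    rw [k2, ← Real.rpow_add_one hRa.ne']; congr 1; ring
  refine ⟨⟨Sm_dil _ _ _ hu, Sm_dil _ _ _ hv, fun z => mul_pos hRa (hu0 _),
    fun z => mul_pos hRb (hv0 _), fun z => ?_, fun z => ?_⟩,
    ⟨R ^ 2 * η, fun z => R ^ α * ξ (dil R (R ^ (1 + s)) z),
      fun z => R ^ β * ζ (dil R (R ^ (1 + s)) z), by positivity,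
      Sm_dil _ _ _ hξ, Sm_dil _ _ _ hζ, fun z => mul_pos hRa (hξ0 _),
    fun z => mul_pos hRb (hζ0 _), fun z => ?_, fun z => ?_⟩⟩
  · rw [gl_dil hR, Real.mul_rpow hRb.le (hv0 _).le, ← h1, k1]; ring
  · rw [gl_dil hR, Real.mul_rpow hRa.le (hu0 _).le, ← h2, k2]; ring
  · rw [gl_dil hR, Real.mul_rpow hRb.le (hv0 _).le]
    have := h3 (dil R (R ^ (1 + s)) z)
    linear_combination (R ^ α * R ^ 2) * this
      + p * v (dil R (R ^ (1 + s)) z) ^ (p - 1) * ζ (dil R (R ^ (1 + s)) z) * k3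
  · rw [gl_dil hR, Real.mul_rpow hRa.le (hu0 _).le]
    have := h4 (dil R (R ^ (1 + s)) z)
    linear_combination (R ^ β * R ^ 2) * this
      + θ * u (dil R (R ^ (1 + s)) z) ^ (θ - 1) * ξ (dil R (R ^ (1 + s)) z) * k4

lemma box_vol {s R : ℝ} (hR : 0 < R) :
    (volume : Measure (Pt N₁ N₂)).real (Metric.closedBall (0 : Fin N₁ → ℝ) R⁻¹ ×ˢ
      Metric.closedBall (0 : Fin N₂ → ℝ) (R ^ (1 + s))⁻¹) =
    2 ^ N₁ * 2 ^ N₂ * R ^ (-((N₁ : ℝ) + (1 + s) * N₂)) := by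
  have hRs : 0 < R ^ (1 + s) := Real.rpow_pos_of_pos hR _
  rw [Measure.volume_eq_prod, measureReal_prod_prod, measureReal_def, measureReal_def,
    Real.volume_pi_closedBall _ (by positivity), Real.volume_pi_closedBall _ (by positivity),
    ENNReal.toReal_ofReal (by positivity), ENNReal.toReal_ofReal (by positivity)]
  simp only [Fintype.card_fin, mul_pow, inv_pow]
  rw [Real.rpow_neg hR.le, Real.rpow_add hR (N₁ : ℝ), Real.rpow_mul hR.le, Real.rpow_natCast,
    Real.rpow_natCast, mul_inv]
  ring

/-- for `θ > 1/p > 1 > p > 0` (so `pθ > 1`), if `N_s < 2 + α + β` then the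
Grushin Lane–Emden system has no smooth stable solution. -/
theorem no_stable_solution_small_p (N₁ N₂ : ℕ) (hN₁ : 1 ≤ N₁) (hN₂ : 1 ≤ N₂)
    (s p θ : ℝ) (hs : 0 ≤ s) (hp0 : 0 < p) (hp1 : p < 1) (hθ : 1 / p < θ)
    (hdim : (N₁ : ℝ) + (1 + s) * N₂ <
      2 + 2 * (p + 1) / (p * θ - 1) + 2 * (θ + 1) / (p * θ - 1)) :
    ¬ ∃ u v : Pt N₁ N₂ → ℝ, IsLaneEmdenSol s p θ u v ∧ IsStable s p θ u v := by
  rintro ⟨u, v, hsol, hst⟩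
  have hpθ : 1 < p * θ := by
    rw [div_lt_iff₀ hp0] at hθ; linarith
  have hne : p * θ - 1 ≠ 0 := by linarith
  have hθp : 0 < θ := lt_trans (by positivity) hθ
  -- cut-off function
  let b : ContDiffBump (0 : Pt N₁ N₂) := ⟨1, 2, by norm_num, by norm_num⟩
  obtain ⟨l, C, hC⟩ := energy (s := s) (p := p) (θ := θ) hs hp0 hp1 hθ (χ := b)
    b.contDiff b.hasCompactSupport (fun z => b.nonneg) (fun z => b.le_one)
  -- minimum of u on the unit ball
  have hu := hsol.1
  have hu0 := hsol.2.2.1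
  obtain ⟨z0, -, hz0⟩ := (isCompact_closedBall (0 : Pt N₁ N₂) 1).exists_isMinOn
    (Metric.nonempty_closedBall.2 zero_le_one) hu.continuous.continuousOn
  set α := 2 * (p + 1) / (p * θ - 1) with hα
  set β := 2 * (θ + 1) / (p * θ - 1) with hβ
  have r : α * (θ + 1) = 2 + α + β := by rw [hα, hβ]; field_simp; ring
  set M := u z0 ^ (θ + 1) with hM
  have hM0 : 0 < M := Real.rpow_pos_of_pos (hu0 z0) _
  set E := 2 + α + β - ((N₁ : ℝ) + (1 + s) * N₂) with hE
  have hE0 : 0 < E := by rw [hE]; linarith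
  have key : ∀ R : ℝ, 1 ≤ R → M * (2 ^ N₁ * 2 ^ N₂) * R ^ E ≤ C := by
    intro R hR1
    have hR : 0 < R := by linarith
    have hRs : 0 < R ^ (1 + s) := Real.rpow_pos_of_pos hR _
    have hRs1 : 1 ≤ R ^ (1 + s) := Real.one_le_rpow hR1 (by linarith)
    obtain ⟨s1, s2⟩ := scale hpθ hR hsol hst
    refine le_trans ?_ (hC _ _ s1 s2)
    have hRa : 0 < R ^ α := Real.rpow_pos_of_pos hR _
    set S : Set (Pt N₁ N₂) := Metric.closedBall (0 : Fin N₁ → ℝ) R⁻¹ ×ˢ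
      Metric.closedBall (0 : Fin N₂ → ℝ) (R ^ (1 + s))⁻¹ with hS
    have hcont : Continuous (fun z => (R ^ α * u (dil R (R ^ (1 + s)) z)) ^ (θ + 1)
        * b z ^ (2 * l + 4)) := by
      have c1 := (s1.1).continuous.rpow_const (p := θ + 1)
        (fun z => Or.inr (by linarith))
      have c2 : Continuous b := b.continuous
      exact c1.mul (c2.pow _)
    have hint : Integrable (fun z => (R ^ α * u (dil R (R ^ (1 + s)) z)) ^ (θ + 1)
        * b z ^ (2 * l + 4)) := by
      apply hcont.integrable_of_hasCompactSupport
      have : (fun z => (R ^ α * u (dil R (R ^ (1 + s)) z)) ^ (θ + 1) * b z ^ (2 * l + 4))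
        = fun z => ((R ^ α * u (dil R (R ^ (1 + s)) z)) ^ (θ + 1) * b z ^ (2 * l + 3)) * b z := by
        funext z; ring
      rw [this]
      exact b.hasCompactSupport.mul_left
    have hScomp : IsCompact S := (isCompact_closedBall _ _).prod (isCompact_closedBall _ _)
    have hSm : MeasurableSet S := hScomp.isClosed.measurableSet
    have hlow : ∀ z ∈ S, R ^ (2 + α + β) * M ≤
        (R ^ α * u (dil R (R ^ (1 + s)) z)) ^ (θ + 1) * b z ^ (2 * l + 4) := by
      intro z hz
      obtain ⟨hz1, hz2⟩ := hz
      rw [mem_closedBall_zero_iff] at hz1 hz2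
      have hb : b z = 1 := by
        apply b.one_of_mem_closedBall
        rw [mem_closedBall_zero_iff]
        change ‖z‖ ≤ 1
        exact max_le (hz1.trans (inv_le_one_of_one_le₀ hR1)) (hz2.trans (inv_le_one_of_one_le₀ hRs1))
      have hd : dil R (R ^ (1 + s)) z ∈ Metric.closedBall (0 : Pt N₁ N₂) 1 := by
        rw [mem_closedBall_zero_iff]
        refine max_le ?_ ?_
        · change ‖R • z.1‖ ≤ 1
          rw [norm_smul, Real.norm_of_nonneg hR.le]
          calc R * ‖z.1‖ ≤ R * R⁻¹ := mul_le_mul_of_nonneg_left hz1 hR.le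
            _ = 1 := mul_inv_cancel₀ hR.ne'
        · change ‖R ^ (1 + s) • z.2‖ ≤ 1
          rw [norm_smul, Real.norm_of_nonneg hRs.le]
          calc R ^ (1 + s) * ‖z.2‖ ≤ R ^ (1 + s) * (R ^ (1 + s))⁻¹ :=
                mul_le_mul_of_nonneg_left hz2 hRs.le
            _ = 1 := mul_inv_cancel₀ hRs.ne'
      rw [hb, one_pow, mul_one, Real.mul_rpow hRa.le (hu0 _).le, ← Real.rpow_mul hR.le, r]
      apply mul_le_mul_of_nonneg_left _ (by positivity)
      exact Real.rpow_le_rpow (hu0 z0).le (hz0 hd) (by linarith)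
    have h1 := setIntegral_ge_of_const_le_real hSm hScomp.measure_lt_top.ne hlow hint.integrableOn
    have h2 := setIntegral_le_integral (s := S) hint (Filter.Eventually.of_forall fun z =>
      mul_nonneg (Real.rpow_nonneg (mul_pos hRa (hu0 _)).le _) (pow_nonneg b.nonneg _))
    rw [box_vol hR] at h1
    refine le_trans (le_of_eq ?_) (h1.trans h2)
    rw [hE, sub_eq_add_neg, Real.rpow_add hR]
    ring
  have ht := (tendsto_rpow_atTop hE0).const_mul_atTop
    (show 0 < M * (2 ^ N₁ * 2 ^ N₂) by positivity)
  obtain ⟨R, hR1, hR2⟩ := ((ht.eventually_gt_atTop C).and (Filter.eventually_ge_atTop 1)).exists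
  exact absurd (key R hR2) (not_le.2 hR1)

end
end

section
/- Let p, θ > 0 with θ ≠ −1, and define L(z) = z⁴ − (16pθ(p+1)/(θ+1)) z² + (16pθ(p+1)(p+θ+2)/(θ+1)²) z − 16pθ(p+1)²/(θ+1)². Then L(p+1) = ((p+1)/(θ+1))² [ (p+1)²(θ+1)² − 16p²θ² ]. Consequently, if θ > p ≥ 1 then L(p+1) < 0. -/
open MeasureTheory Real

noncomputable section

variable {N₁ N₂ : ℕ}

/-- value of the quartic `L` at `z = p+1`:
`L(p+1) = ((p+1)/(θ+1))² [(p+1)²(θ+1)² - 16p²θ²]`; consequently `L(p+1) < 0` when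
`θ > p ≥ 1`. -/
theorem quartic_value_at (p θ : ℝ) (hp : 0 < p) (hθ : 0 < θ) (hθ' : θ ≠ -1) :
    ((p + 1) ^ 4 - (16 * p * θ * (p + 1) / (θ + 1)) * (p + 1) ^ 2
        + (16 * p * θ * (p + 1) * (p + θ + 2) / (θ + 1) ^ 2) * (p + 1)
        - 16 * p * θ * (p + 1) ^ 2 / (θ + 1) ^ 2
      = ((p + 1) / (θ + 1)) ^ 2 * ((p + 1) ^ 2 * (θ + 1) ^ 2 - 16 * p ^ 2 * θ ^ 2))
    ∧ (1 ≤ p → p < θ →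
      (p + 1) ^ 4 - (16 * p * θ * (p + 1) / (θ + 1)) * (p + 1) ^ 2
        + (16 * p * θ * (p + 1) * (p + θ + 2) / (θ + 1) ^ 2) * (p + 1)
        - 16 * p * θ * (p + 1) ^ 2 / (θ + 1) ^ 2 < 0) := by
  have h1 : θ + 1 ≠ 0 := by positivity
  have key : (p + 1) ^ 4 - (16 * p * θ * (p + 1) / (θ + 1)) * (p + 1) ^ 2
        + (16 * p * θ * (p + 1) * (p + θ + 2) / (θ + 1) ^ 2) * (p + 1)
        - 16 * p * θ * (p + 1) ^ 2 / (θ + 1) ^ 2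
      = ((p + 1) / (θ + 1)) ^ 2 * ((p + 1) ^ 2 * (θ + 1) ^ 2 - 16 * p ^ 2 * θ ^ 2) := by
    field_simp
    ring
  refine ⟨key, fun h1p hpθ => ?_⟩
  rw [key]
  have hlt : (p + 1) * (θ + 1) < 4 * p * θ := by nlinarith
  have hpos : 0 < (p + 1) * (θ + 1) := by positivity
  have hneg : (p + 1) ^ 2 * (θ + 1) ^ 2 - 16 * p ^ 2 * θ ^ 2 < 0 := by
    nlinarith
  exact mul_neg_of_pos_of_neg (by positivity) hneg

end
end

section
/- Let θ > p ≥ 1 and define L(z) = z⁴ − (16pθ(p+1)/(θ+1)) z² + (16pθ(p+1)(p+θ+2)/(θ+1)²) z − 16pθ(p+1)²/(θ+1)². Then there exists a real number z₀ > p+1 with L(z₀) = 0, and moreover every real root of L that is maximal among the real roots of L is strictly greater than p+1. Consequently, with α = 2(p+1)/(pθ−1) and β = 2(θ+1)/(pθ−1), the largest real root z₀ of L satisfies β z₀ > (p+1)β = 2 + α + β. -/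
open MeasureTheory Real

noncomputable section

variable {N₁ N₂ : ℕ}

/-- for `θ > p ≥ 1` the quartic `L` has a real root `> p+1`, every maximal
real root of `L` is `> p+1`, and the largest real root `z₀` satisfies
`β z₀ > (p+1)β = 2 + α + β`, where `α = 2(p+1)/(pθ-1)`, `β = 2(θ+1)/(pθ-1)`. -/
theorem largest_root (p θ : ℝ) (hp : 1 ≤ p) (hpθ : p < θ) :
    (∃ z₀ : ℝ, p + 1 < z₀ ∧
      z₀ ^ 4 - (16 * p * θ * (p + 1) / (θ + 1)) * z₀ ^ 2
        + (16 * p * θ * (p + 1) * (p + θ + 2) / (θ + 1) ^ 2) * z₀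
        - 16 * p * θ * (p + 1) ^ 2 / (θ + 1) ^ 2 = 0)
    ∧ ∀ z₀ : ℝ,
      (z₀ ^ 4 - (16 * p * θ * (p + 1) / (θ + 1)) * z₀ ^ 2
          + (16 * p * θ * (p + 1) * (p + θ + 2) / (θ + 1) ^ 2) * z₀
          - 16 * p * θ * (p + 1) ^ 2 / (θ + 1) ^ 2 = 0) →
      (∀ z : ℝ, z ^ 4 - (16 * p * θ * (p + 1) / (θ + 1)) * z ^ 2
          + (16 * p * θ * (p + 1) * (p + θ + 2) / (θ + 1) ^ 2) * z
          - 16 * p * θ * (p + 1) ^ 2 / (θ + 1) ^ 2 = 0 → z ≤ z₀) →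
      (p + 1 < z₀
        ∧ (p + 1) * (2 * (θ + 1) / (p * θ - 1)) < (2 * (θ + 1) / (p * θ - 1)) * z₀
        ∧ (p + 1) * (2 * (θ + 1) / (p * θ - 1))
            = 2 + 2 * (p + 1) / (p * θ - 1) + 2 * (θ + 1) / (p * θ - 1)) := by
  have hθ : 1 < θ := lt_of_le_of_lt hp hpθ
  have hθ1 : 0 < θ + 1 := by linarith
  have hp0 : 0 < p := by linarith
  have hθ0 : 0 < θ := by linarith
  have hd : 0 < p * θ - 1 := by nlinarith
  have hex : ∃ z₀ : ℝ, p + 1 < z₀ ∧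
      z₀ ^ 4 - (16 * p * θ * (p + 1) / (θ + 1)) * z₀ ^ 2
        + (16 * p * θ * (p + 1) * (p + θ + 2) / (θ + 1) ^ 2) * z₀
        - 16 * p * θ * (p + 1) ^ 2 / (θ + 1) ^ 2 = 0 := by
    have hneg : (p + 1) ^ 4 - (16 * p * θ * (p + 1) / (θ + 1)) * (p + 1) ^ 2
        + (16 * p * θ * (p + 1) * (p + θ + 2) / (θ + 1) ^ 2) * (p + 1)
        - 16 * p * θ * (p + 1) ^ 2 / (θ + 1) ^ 2 < 0 := by
      have e : (p + 1) ^ 4 - (16 * p * θ * (p + 1) / (θ + 1)) * (p + 1) ^ 2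
          + (16 * p * θ * (p + 1) * (p + θ + 2) / (θ + 1) ^ 2) * (p + 1)
          - 16 * p * θ * (p + 1) ^ 2 / (θ + 1) ^ 2
          = - ((p + 1) ^ 2 * ((4 * p * θ - (p + 1) * (θ + 1))
              * (4 * p * θ + (p + 1) * (θ + 1))) / (θ + 1) ^ 2) := by
        field_simp
        ring
      rw [e, neg_lt_zero]
      have h1 : 0 < 4 * p * θ - (p + 1) * (θ + 1) := by nlinarith
      positivity
    have hA : 0 < 16 * p * θ * (p + 1) / (θ + 1) := by positivity
    have hB : 0 < 16 * p * θ * (p + 1) * (p + θ + 2) / (θ + 1) ^ 2 := by positivity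
    have hC : 0 < 16 * p * θ * (p + 1) ^ 2 / (θ + 1) ^ 2 := by positivity
    generalize 16 * p * θ * (p + 1) / (θ + 1) = A at *
    generalize 16 * p * θ * (p + 1) * (p + θ + 2) / (θ + 1) ^ 2 = B at *
    generalize 16 * p * θ * (p + 1) ^ 2 / (θ + 1) ^ 2 = C at *
    obtain ⟨M, hM⟩ : ∃ M, M = p + 1 + A + C := ⟨_, rfl⟩
    have hM1 : 1 ≤ M := by linarith
    have hpM : p + 1 ≤ M := by linarith
    have hM2 : M ≤ M ^ 2 := by nlinarith
    have hpos : 0 < M ^ 4 - A * M ^ 2 + B * M - C := by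
      have h2 : C < M ^ 2 - A := by linarith
      have h3 : M ^ 2 - A ≤ M ^ 2 * (M ^ 2 - A) :=
        le_mul_of_one_le_left (by linarith) (by linarith)
      have h4 : 0 < B * M := by positivity
      nlinarith
    have hc : ContinuousOn (fun z : ℝ => z ^ 4 - A * z ^ 2 + B * z - C) (Set.Icc (p + 1) M) := by
      fun_prop
    obtain ⟨z, hz, hz0⟩ := intermediate_value_Icc hpM hc ⟨hneg.le, hpos.le⟩
    refine ⟨z, lt_of_le_of_ne hz.1 ?_, hz0⟩
    rintro rfl
    exact hneg.ne hz0
  refine ⟨hex, fun z₀ _ hmax => ?_⟩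
  obtain ⟨z, hz, hz0⟩ := hex
  have hlt : p + 1 < z₀ := lt_of_lt_of_le hz (hmax z hz0)
  refine ⟨hlt, ?_, ?_⟩
  · rw [mul_comm]
    exact mul_lt_mul_of_pos_left hlt (by positivity)
  · have := hd.ne'
    field_simp
    ring

end
end

section
/- Let s ≥ 0 and r > 2. There exists a constant C_r > 0 such that for every smooth nonnegative function u on ℝ^N and every smooth function ψ : ℝ^N → [0,1] the following pointwise inequality holds on ℝ^N: |∇_s² u| ψ^r ≤ C_r [ u ( |∇_s ψ|² ψ^{r−2} + |∇_s² ψ| ψ^{r−1} ) + |∇_s u| |∇_s ψ| ψ^{r−1} + |∇_s²(u ψ^r)| ]. -/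
open MeasureTheory Real

noncomputable section

variable {N₁ N₂ : ℕ}

lemma pX_eq_fderiv (i : Fin N₁) {w : Pt N₁ N₂ → ℝ} (hw : Differentiable ℝ w) :
    pX i w = fun z => fderiv ℝ w z (Pi.single i 1, 0) := by
  funext z
  have h1 : HasDerivAt (fun t : ℝ => ((Function.update z.1 i t, z.2) : Pt N₁ N₂))
      (Pi.single i 1, 0) (z.1 i) :=
    (hasDerivAt_update z.1 i (z.1 i)).prodMk (hasDerivAt_const _ _)
  have hz : ((Function.update z.1 i (z.1 i), z.2) : Pt N₁ N₂) = z := by simp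
  have h2 : HasFDerivAt w (fderiv ℝ w z) (Function.update z.1 i (z.1 i), z.2) := by
    rw [hz]; exact (hw z).hasFDerivAt
  exact (h2.comp_hasDerivAt (z.1 i) h1).deriv

lemma pY_eq_fderiv (j : Fin N₂) {w : Pt N₁ N₂ → ℝ} (hw : Differentiable ℝ w) :
    pY j w = fun z => fderiv ℝ w z (0, Pi.single j 1) := by
  funext z
  have h1 : HasDerivAt (fun t : ℝ => ((z.1, Function.update z.2 j t) : Pt N₁ N₂))
      (0, Pi.single j 1) (z.2 j) :=
    (hasDerivAt_const _ _).prodMk (hasDerivAt_update z.2 j (z.2 j))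
  have hz : ((z.1, Function.update z.2 j (z.2 j)) : Pt N₁ N₂) = z := by simp
  have h2 : HasFDerivAt w (fderiv ℝ w z) (z.1, Function.update z.2 j (z.2 j)) := by
    rw [hz]; exact (hw z).hasFDerivAt
  exact (h2.comp_hasDerivAt (z.2 j) h1).deriv

lemma differentiable_dir {w : Pt N₁ N₂ → ℝ} (hw : ContDiff ℝ (⊤ : ℕ∞) w) (e : Pt N₁ N₂) :
    Differentiable ℝ (fun z => fderiv ℝ w z e) := by
  have h2 : ContDiff ℝ 2 w := hw.of_le (WithTop.coe_le_coe.2 le_top)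
  have h : ContDiff ℝ 1 (fderiv ℝ w) := h2.fderiv_right (by norm_num)
  exact (h.differentiable one_ne_zero).clm_apply (differentiable_const e)

lemma hasFDerivAt_mul_rpow {u ψ : Pt N₁ N₂ → ℝ} {q : ℝ} (hq : 1 ≤ q) {z : Pt N₁ N₂}
    (hu : DifferentiableAt ℝ u z) (hψ : DifferentiableAt ℝ ψ z) :
    HasFDerivAt (fun w => u w * ψ w ^ q)
      (u z • ((q * ψ z ^ (q - 1)) • fderiv ℝ ψ z) + (ψ z ^ q) • fderiv ℝ u z) z :=
  hu.hasFDerivAt.mul (hψ.hasFDerivAt.rpow_const (Or.inr hq))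

lemma dir_mul_rpow {u ψ : Pt N₁ N₂ → ℝ} {r : ℝ} (hr : 2 < r)
    (hu : Differentiable ℝ u) (hψ : Differentiable ℝ ψ) (e : Pt N₁ N₂) :
    (fun z => fderiv ℝ (fun w => u w * ψ w ^ r) z e) =
      fun z => fderiv ℝ u z e * ψ z ^ r
        + (r * (u z * fderiv ℝ ψ z e)) * ψ z ^ (r - 1) := by
  funext z
  rw [(hasFDerivAt_mul_rpow (by linarith) (hu z) (hψ z)).fderiv]
  simp
  ring

lemma differentiable_mul_rpow {u ψ : Pt N₁ N₂ → ℝ} {q : ℝ} (hq : 1 ≤ q)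
    (hu : Differentiable ℝ u) (hψ : Differentiable ℝ ψ) :
    Differentiable ℝ (fun w => u w * ψ w ^ q) :=
  fun z => (hasFDerivAt_mul_rpow hq (hu z) (hψ z)).differentiableAt

lemma differentiable_dir_mul_rpow {u ψ : Pt N₁ N₂ → ℝ} {r : ℝ} (hr : 2 < r)
    (hu : ContDiff ℝ (⊤ : ℕ∞) u) (hψ : ContDiff ℝ (⊤ : ℕ∞) ψ) (e : Pt N₁ N₂) :
    Differentiable ℝ (fun z => fderiv ℝ (fun w => u w * ψ w ^ r) z e) := by
  have du : Differentiable ℝ u := hu.differentiable (by simp)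
  have dψ : Differentiable ℝ ψ := hψ.differentiable (by simp)
  rw [dir_mul_rpow hr du dψ]
  exact (differentiable_mul_rpow (by linarith) (differentiable_dir hu e) dψ).add
    (differentiable_mul_rpow (by linarith)
      ((du.mul (differentiable_dir hψ e)).const_mul r) dψ)

/-- Second directional derivatives of `u ψ^r`. -/
lemma dir_dir_mul_rpow {u ψ : Pt N₁ N₂ → ℝ} {r : ℝ} (hr : 2 < r)
    (hu : ContDiff ℝ (⊤ : ℕ∞) u) (hψ : ContDiff ℝ (⊤ : ℕ∞) ψ) (d e z : Pt N₁ N₂) :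
    fderiv ℝ (fun z => fderiv ℝ (fun w => u w * ψ w ^ r) z e) z d =
      fderiv ℝ (fun z => fderiv ℝ u z e) z d * ψ z ^ r
      + r * ψ z ^ (r - 1) * (fderiv ℝ u z e * fderiv ℝ ψ z d + fderiv ℝ u z d * fderiv ℝ ψ z e)
      + r * (r - 1) * u z * ψ z ^ (r - 2) * (fderiv ℝ ψ z d * fderiv ℝ ψ z e)
      + r * u z * ψ z ^ (r - 1) * fderiv ℝ (fun z => fderiv ℝ ψ z e) z d := by
  have du : Differentiable ℝ u := hu.differentiable (by simp)
  have dψ : Differentiable ℝ ψ := hψ.differentiable (by simp)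
  rw [dir_mul_rpow hr du dψ]
  have hm : HasFDerivAt (fun z => r * (u z * fderiv ℝ ψ z e)) _ z :=
    ((du z).hasFDerivAt.mul (differentiable_dir hψ e z).hasFDerivAt).const_mul r
  have h1 := hasFDerivAt_mul_rpow (q := r) (by linarith) (differentiable_dir hu e z) (dψ z)
  have h2 := hasFDerivAt_mul_rpow (q := r - 1) (by linarith) hm.differentiableAt (dψ z)
  rw [(h1.fun_add h2).fderiv, hm.fderiv]
  have hr2 : r - 1 - 1 = r - 2 := by ring
  simp [hr2]
  ring

/-- The Grushin gradient as a Euclidean vector. -/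
def gVec (s : ℝ) (w : Pt N₁ N₂ → ℝ) (z : Pt N₁ N₂) :
    EuclideanSpace ℝ (Fin N₁ ⊕ Fin N₂) :=
  WithLp.toLp 2 (Sum.elim (fun i => pX i w z) (fun j => enorm' z.1 ^ s * pY j w z))

/-- The Grushin Hessian as a Euclidean vector. -/
def hVec (s : ℝ) (w : Pt N₁ N₂ → ℝ) (z : Pt N₁ N₂) :
    EuclideanSpace ℝ ((Fin N₁ ⊕ Fin N₂) × (Fin N₁ ⊕ Fin N₂)) :=
  WithLp.toLp 2 (fun p => Sum.elim
    (fun i => Sum.elim (fun j => pX i (pX j w) z) (fun k => enorm' z.1 ^ s * pX i (pY k w) z) p.2)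
    (fun h => Sum.elim (fun j => enorm' z.1 ^ s * pX j (pY h w) z)
      (fun k => (enorm' z.1 ^ s) ^ 2 * pY h (pY k w) z) p.2) p.1)

/-- Tensor product of two vectors. -/
def tVec {ι : Type} [Fintype ι] (a b : EuclideanSpace ℝ ι) : EuclideanSpace ℝ (ι × ι) :=
  WithLp.toLp 2 (fun p => a p.1 * b p.2)

lemma norm_tVec {ι : Type} [Fintype ι] (a b : EuclideanSpace ℝ ι) :
    ‖tVec a b‖ = ‖a‖ * ‖b‖ := by
  rw [EuclideanSpace.norm_eq, EuclideanSpace.norm_eq, EuclideanSpace.norm_eq,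
    ← Real.sqrt_mul (Finset.sum_nonneg fun i _ => sq_nonneg _), Finset.sum_mul_sum,
    Fintype.sum_prod_type]
  simp [tVec, mul_pow]

lemma enorm'_nonneg {n : ℕ} (x : Fin n → ℝ) : 0 ≤ enorm' x := Real.sqrt_nonneg _

lemma enorm'_two {n : ℕ} (x : Fin n → ℝ) (s : ℝ) : enorm' x ^ (2 * s) = (enorm' x ^ s) ^ 2 := by
  rw [mul_comm, ← Real.rpow_mul_natCast (enorm'_nonneg x)]; norm_num

lemma enorm'_four {n : ℕ} (x : Fin n → ℝ) (s : ℝ) : enorm' x ^ (4 * s) = (enorm' x ^ s) ^ 4 := by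
  rw [mul_comm, ← Real.rpow_mul_natCast (enorm'_nonneg x)]; norm_num

lemma norm_gVec (s : ℝ) (w : Pt N₁ N₂ → ℝ) (z : Pt N₁ N₂) :
    ‖gVec s w z‖ = grushinGrad s w z := by
  rw [EuclideanSpace.norm_eq, grushinGrad, enorm'_two]
  simp [gVec, mul_pow, Finset.mul_sum]

lemma norm_hVec (s : ℝ) (w : Pt N₁ N₂ → ℝ) (z : Pt N₁ N₂) :
    ‖hVec s w z‖ = grushinHess s w z := by
  rw [EuclideanSpace.norm_eq, grushinHess, enorm'_two, enorm'_four, Fintype.sum_prod_type]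
  congr 1
  have hc : ∑ h : Fin N₂, ∑ j : Fin N₁, (pX j (pY h w) z) ^ 2
      = ∑ i : Fin N₁, ∑ k : Fin N₂, (pX i (pY k w) z) ^ 2 := Finset.sum_comm
  simp only [hVec, Fintype.sum_sum_type, Sum.elim_inl, Sum.elim_inr, Real.norm_eq_abs, sq_abs,
    mul_pow, Finset.sum_add_distrib, ← Finset.mul_sum, hc]
  ring

/-- The product formula for the Grushin Hessian. -/
lemma hVec_mul_rpow {u ψ : Pt N₁ N₂ → ℝ} {r : ℝ} (s : ℝ) (hr : 2 < r)
    (hu : ContDiff ℝ (⊤ : ℕ∞) u) (hψ : ContDiff ℝ (⊤ : ℕ∞) ψ) (z : Pt N₁ N₂) :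
    (ψ z ^ r) • hVec s u z = hVec s (fun w => u w * ψ w ^ r) z
      - (r * ψ z ^ (r - 1)) • (tVec (gVec s u z) (gVec s ψ z) + tVec (gVec s ψ z) (gVec s u z))
      - (r * (r - 1) * u z * ψ z ^ (r - 2)) • tVec (gVec s ψ z) (gVec s ψ z)
      - (r * u z * ψ z ^ (r - 1)) • hVec s ψ z := by
  have du : Differentiable ℝ u := hu.differentiable (by simp)
  have dψ : Differentiable ℝ ψ := hψ.differentiable (by simp)
  have dv : Differentiable ℝ (fun w => u w * ψ w ^ r) :=
    differentiable_mul_rpow (by linarith) du dψ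
  ext ⟨p, q⟩
  rcases p with i | i <;> rcases q with j | j <;>
    simp only [hVec, gVec, tVec, PiLp.smul_apply, PiLp.sub_apply, PiLp.add_apply, Sum.elim_inl,
      Sum.elim_inr, smul_eq_mul, pX_eq_fderiv _ du, pX_eq_fderiv _ dψ, pX_eq_fderiv _ dv,
      pY_eq_fderiv _ du, pY_eq_fderiv _ dψ, pY_eq_fderiv _ dv,
      pX_eq_fderiv _ (differentiable_dir hu _), pX_eq_fderiv _ (differentiable_dir hψ _),
      pX_eq_fderiv _ (differentiable_dir_mul_rpow hr hu hψ _),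
      pY_eq_fderiv _ (differentiable_dir hu _), pY_eq_fderiv _ (differentiable_dir hψ _),
      pY_eq_fderiv _ (differentiable_dir_mul_rpow hr hu hψ _),
      dir_dir_mul_rpow hr hu hψ] <;> ring

/-- pointwise Grushin-Hessian inequality: for `s ≥ 0` and `r > 2` there is
`C_r > 0` such that for all smooth `u ≥ 0` and smooth `ψ : ℝ^N → [0,1]`,
`|∇_s² u| ψ^r ≤ C_r [u(|∇_s ψ|² ψ^{r-2} + |∇_s² ψ| ψ^{r-1})
  + |∇_s u||∇_s ψ| ψ^{r-1} + |∇_s²(u ψ^r)|]` pointwise on `ℝ^N`. -/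
theorem pointwise_hessian_estimate (N₁ N₂ : ℕ) (hN₁ : 1 ≤ N₁) (hN₂ : 1 ≤ N₂)
    (s r : ℝ) (hs : 0 ≤ s) (hr : 2 < r) :
    ∃ C > (0 : ℝ), ∀ u ψ : Pt N₁ N₂ → ℝ,
      ContDiff ℝ (⊤ : ℕ∞) u → (∀ z, 0 ≤ u z) →
      ContDiff ℝ (⊤ : ℕ∞) ψ → (∀ z, 0 ≤ ψ z ∧ ψ z ≤ 1) →
      ∀ z : Pt N₁ N₂,
        grushinHess s u z * ψ z ^ r ≤
          C * (u z * (grushinGrad s ψ z ^ 2 * ψ z ^ (r - 2)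
                + grushinHess s ψ z * ψ z ^ (r - 1))
            + grushinGrad s u z * grushinGrad s ψ z * ψ z ^ (r - 1)
            + grushinHess s (fun w => u w * ψ w ^ r) z) := by
  refine ⟨1 + 2 * r + r * (r - 1), by nlinarith, ?_⟩
  intro u ψ hu hu0 hψ hψ0 z
  have hP : 0 ≤ ψ z := (hψ0 z).1
  have h0 := Real.rpow_nonneg hP r
  have h1 := Real.rpow_nonneg hP (r - 1)
  have h2 := Real.rpow_nonneg hP (r - 2)
  have hU := hu0 z
  have key := congrArg norm (hVec_mul_rpow s hr hu hψ z)
  rw [norm_smul, Real.norm_of_nonneg h0] at key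
  have b1 := norm_sub_le (hVec s (fun w => u w * ψ w ^ r) z
      - (r * ψ z ^ (r - 1)) • (tVec (gVec s u z) (gVec s ψ z) + tVec (gVec s ψ z) (gVec s u z))
      - (r * (r - 1) * u z * ψ z ^ (r - 2)) • tVec (gVec s ψ z) (gVec s ψ z))
      ((r * u z * ψ z ^ (r - 1)) • hVec s ψ z)
  have b2 := norm_sub_le (hVec s (fun w => u w * ψ w ^ r) z
      - (r * ψ z ^ (r - 1)) • (tVec (gVec s u z) (gVec s ψ z) + tVec (gVec s ψ z) (gVec s u z)))
      ((r * (r - 1) * u z * ψ z ^ (r - 2)) • tVec (gVec s ψ z) (gVec s ψ z))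
  have b3 := norm_sub_le (hVec s (fun w => u w * ψ w ^ r) z)
      ((r * ψ z ^ (r - 1)) • (tVec (gVec s u z) (gVec s ψ z) + tVec (gVec s ψ z) (gVec s u z)))
  have b4 := norm_add_le (tVec (gVec s u z) (gVec s ψ z)) (tVec (gVec s ψ z) (gVec s u z))
  have hr0 : 0 ≤ r := by linarith
  have hr1 : 0 ≤ r - 1 := by linarith
  have c1 : 0 ≤ r * ψ z ^ (r - 1) := by positivity
  have c2 : 0 ≤ r * (r - 1) * u z * ψ z ^ (r - 2) := by positivity
  have c3 : 0 ≤ r * u z * ψ z ^ (r - 1) := by positivity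
  rw [norm_smul, Real.norm_of_nonneg c3] at b1
  rw [norm_smul, Real.norm_of_nonneg c2, norm_tVec] at b2
  rw [norm_smul, Real.norm_of_nonneg c1] at b3
  have b5 := mul_le_mul_of_nonneg_left b4 c1
  rw [norm_tVec, norm_tVec] at b5
  simp only [norm_gVec, norm_hVec] at key b1 b2 b3 b5
  have gu : 0 ≤ grushinGrad s u z := Real.sqrt_nonneg _
  have gp : 0 ≤ grushinGrad s ψ z := Real.sqrt_nonneg _
  have hp : 0 ≤ grushinHess s ψ z := Real.sqrt_nonneg _
  have hv : 0 ≤ grushinHess s (fun w => u w * ψ w ^ r) z := Real.sqrt_nonneg _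
  have t1 : 0 ≤ u z * (grushinGrad s ψ z ^ 2 * ψ z ^ (r - 2)) := by positivity
  have t2 : 0 ≤ u z * (grushinHess s ψ z * ψ z ^ (r - 1)) := by positivity
  have t3 : 0 ≤ grushinGrad s u z * grushinGrad s ψ z * ψ z ^ (r - 1) := by positivity
  have hrr : 0 ≤ r * (r - 1) := by positivity
  calc grushinHess s u z * ψ z ^ r
      ≤ grushinHess s (fun w => u w * ψ w ^ r) z
        + 2 * r * (grushinGrad s u z * grushinGrad s ψ z * ψ z ^ (r - 1))
        + r * (r - 1) * (u z * (grushinGrad s ψ z ^ 2 * ψ z ^ (r - 2)))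
        + r * (u z * (grushinHess s ψ z * ψ z ^ (r - 1))) := by
        rw [mul_comm, key]
        linarith
    _ ≤ _ := by
        have e1 := mul_nonneg (show 0 ≤ 1 + 2 * r by linarith) t1
        have e2 := mul_nonneg (show 0 ≤ 1 + r + r * (r - 1) by linarith) t2
        have e3 := mul_nonneg (show 0 ≤ 1 + r * (r - 1) by linarith) t3
        have e4 := mul_nonneg (show 0 ≤ 2 * r + r * (r - 1) by linarith) hv
        linarith

end
end
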